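/- Let b ≥ 2 and k > 2b be integers and let 𝒜 = {A_1, …, A_n} be a finite family of subsets of ℝ² satisfying: (i) f_{k+1}(𝒜) = 0, and (ii) for every σ ⊆ {1, …, n} with |σ| ∈ {k, k+1}, the set A_σ is open (possibly empty) and has at most b path-connected components. Then f_k(𝒜) ≤ (b/(k−2b)) · f^{ind}_{k-1}(𝒜). -/

import Mathlib

/-- `fNum A k` is `f_k(𝒜)`: the number of subsets `σ` of the index set with
`|σ| = k+1` such that `⋂ i ∈ σ, A i` is nonempty. -/
noncomputable def fNum {α : Type*} {n : ℕ} (A : Fin n → Set α) (k : ℕ) : ℕ :=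
  Nat.card {σ : Finset (Fin n) // σ.card = k + 1 ∧ (⋂ i ∈ σ, A i).Nonempty}

/-- `fInd A k` is `f_k^{ind}(𝒜)`: the number of subsets `τ` with `|τ| = k+1` and
`⋂ i ∈ τ, A i ≠ ∅` for which there is `σ ⊃ τ` with `|σ| = k+2` and `⋂ i ∈ σ, A i ≠ ∅`. -/
noncomputable def fInd {α : Type*} {n : ℕ} (A : Fin n → Set α) (k : ℕ) : ℕ :=
  Nat.card {τ : Finset (Fin n) // τ.card = k + 1 ∧ (⋂ i ∈ τ, A i).Nonempty ∧
    ∃ σ : Finset (Fin n), τ ⊂ σ ∧ σ.card = k + 2 ∧ (⋂ i ∈ σ, A i).Nonempty}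

/-- A set `S` has at most `b` path-connected components: there are `b` points such that
every point of `S` can be joined inside `S` to one of them. -/
def AtMostComponents {X : Type*} [TopologicalSpace X] (b : ℕ) (S : Set X) : Prop :=
  ∃ g : Fin b → X, ∀ x ∈ S, ∃ j : Fin b, JoinedIn S x (g j)

/-!
Take as vertices the path components `D` of the `(k + 1)`-fold intersections, and as blocks the
path components `C` of the `k`-fold intersections that contain one of them. As all `(k + 2)`-fold
intersections are empty, the vertices are pairwise disjoint and two blocks meet only inside
vertices.

Replacing all these sets by compact connected cores and these by the squares of a fine grid that
meet them, the grid points in the blocks can be distributed among the vertices so that contraction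
gives a graph on the vertices in which those inside each block are connected. The cycle space of
such a contraction is spanned by the boundaries of the faces, so by MacLane's argument the graph
has at most three times as many edges as vertices.

Choose a spanning tree inside each block `C`, and call a pair of `C` and one of its vertices `D`
essential if `D` is the root, or `C` belongs to a distinguished facet of the index set of `D`, or
this index set differs from that of the parent of `D`. Apart from the roots, the tree edge
determines an essential pair, so there are at most `#blocks + #edges` of them. On the other hand
each vertex has its distinguished facet, and each of the `k` other facets of an index set is
essential at some vertex, so `k * f_k + #vertices ≤ #blocks + #edges ≤ #blocks + 3 * #vertices`.
There are at most `b * f_k` vertices and `b * f_{k-1}^{ind}` blocks.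
-/

namespace PlanarNerve

open scoped Finset

section Coboundary

variable {ι R : Type*}

/-- The coboundary of a `0`-cochain on `R`, where the edge `i : ι` has endpoints `l i`, `r i`. For
the faces `l i`, `r i` on the two sides of an edge `i` of a plane graph, its values are boundaries
of sets of faces. -/
def coboundary (l r : ι → R) : (R → ZMod 2) →ₗ[ZMod 2] (ι → ZMod 2) :=
  LinearMap.funLeft (ZMod 2) (ZMod 2) l + LinearMap.funLeft (ZMod 2) (ZMod 2) r

@[simp]
lemma coboundary_apply (l r : ι → R) (f : R → ZMod 2) (i : ι) :
    coboundary l r f i = f (l i) + f (r i) := rfl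

lemma range_coboundary_le_span [Fintype ι] [DecidableEq R] (l r : ι → R) :
    LinearMap.range (coboundary l r) ≤ Submodule.span (ZMod 2)
      ((Finset.univ.image l ∪ Finset.univ.image r).image fun ρ =>
        coboundary l r (Pi.single ρ 1)) := by
  rintro _ ⟨f, rfl⟩
  have expand : coboundary l r f = ∑ ρ ∈ Finset.univ.image l ∪ Finset.univ.image r,
      f ρ • coboundary l r (Pi.single ρ 1) := by
    ext i
    simp [Finset.sum_apply, Pi.single_apply, mul_add, Finset.sum_add_distrib]
  rw [expand]
  exact Submodule.sum_mem _ fun ρ hρ => Submodule.smul_mem _ _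
    (Submodule.subset_span (Finset.mem_coe.2 (Finset.mem_image_of_mem _ hρ)))

/-- Each `i` lies in the supports of at most two of the coboundaries of points, which span. -/
lemma mul_finrank_range_coboundary_le [Fintype ι] {l r : ι → R} {m : ℕ}
    (hm : ∀ f, coboundary l r f ≠ 0 → m ≤ #{i | coboundary l r f i ≠ 0}) :
    m * Module.finrank (ZMod 2) (LinearMap.range (coboundary l r)) ≤ 2 * Fintype.card ι := by
  classical
  let S : Finset R := Finset.univ.image l ∪ Finset.univ.image r
  let T : Finset R := {ρ ∈ S | coboundary l r (Pi.single ρ 1) ≠ 0}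
  have le_span : LinearMap.range (coboundary l r) ≤
      Submodule.span (ZMod 2) (T.image fun ρ => coboundary l r (Pi.single ρ 1)) := by
    refine (range_coboundary_le_span l r).trans (Submodule.span_le.2 ?_)
    rintro _ hx
    obtain ⟨ρ, hρ, rfl⟩ := Finset.mem_image.1 hx
    by_cases h : coboundary l r (Pi.single ρ 1) = 0
    · simp [h]
    · exact Submodule.subset_span <| Finset.mem_coe.2 <|
        Finset.mem_image_of_mem (fun ρ => coboundary l r (Pi.single ρ 1))
          (Finset.mem_filter.2 ⟨hρ, h⟩)
  have finrank_le : Module.finrank (ZMod 2) (LinearMap.range (coboundary l r)) ≤ #T :=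
    (Submodule.finrank_mono le_span).trans
      ((finrank_span_finset_le_card _).trans Finset.card_image_le)
  have double_count : #T * m ≤ #(Finset.univ : Finset ι) * 2 := by
    refine Finset.card_mul_le_card_mul (fun ρ i => coboundary l r (Pi.single ρ 1) i ≠ 0)
      (fun ρ hρ => hm _ (Finset.mem_filter.1 hρ).2) (fun i _ => ?_)
    refine (Finset.card_le_card fun ρ hρ => ?_).trans (Finset.card_le_two (a := l i) (b := r i))
    have := (Finset.mem_filter.1 hρ).2
    contrapose! this
    aesop
  calc m * _ ≤ m * #T := Nat.mul_le_mul_left m finrank_le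
    _ ≤ 2 * Fintype.card ι := by rw [mul_comm, mul_comm 2]; exact double_count

end Coboundary

section MacLane

variable {V : Type*} (G : SimpleGraph V) [Fintype G.edgeSet]

open Classical in
/-- The boundary operator of a graph over `ℤ/2`; its kernel is the cycle space. -/
noncomputable def graphBoundary : (G.edgeSet → ZMod 2) →ₗ[ZMod 2] (V → ZMod 2) :=
  LinearMap.pi fun w => ∑ p : G.edgeSet, if w ∈ p.1 then LinearMap.proj p else 0

open Classical in
lemma graphBoundary_apply (h : G.edgeSet → ZMod 2) (w : V) :
    graphBoundary G h w = ∑ p : G.edgeSet, if w ∈ p.1 then h p else 0 := by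
  simp only [graphBoundary, LinearMap.pi_apply, LinearMap.sum_apply]
  exact Finset.sum_congr rfl fun p _ => by split_ifs <;> rfl

lemma card_edgeSet_le_finrank_ker_graphBoundary_add [Fintype V] :
    Fintype.card G.edgeSet ≤
      Module.finrank (ZMod 2) (LinearMap.ker (graphBoundary G)) + Fintype.card V := by
  have rank_nullity := LinearMap.finrank_range_add_finrank_ker (graphBoundary G)
  have range_le := Submodule.finrank_le (LinearMap.range (graphBoundary G))
  simp only [Module.finrank_fintype_fun_eq_card] at rank_nullity range_le
  omega

variable {G}

lemma graphBoundary_single [DecidableEq V] {p : G.edgeSet} {u v : V} (hp : p.1 = s(u, v)) :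
    graphBoundary G (Pi.single p 1) = Pi.single u 1 + Pi.single v 1 := by
  ext w
  have u_ne_v : u ≠ v := G.ne_of_adj (G.mem_edgeSet.1 (hp ▸ p.2))
  rw [graphBoundary_apply, Finset.sum_eq_single_of_mem p (Finset.mem_univ p), hp]
  · simp only [Sym2.mem_iff, Pi.add_apply, Pi.single_apply]
    grind
  · intro q _ hq
    simp [hq]

lemma exists_ne_mem_of_graphBoundary_eq_zero {h : G.edgeSet → ZMod 2} (hh : graphBoundary G h = 0)
    {p : G.edgeSet} (hp : h p ≠ 0) {w : V} (hw : w ∈ p.1) : ∃ q ≠ p, h q ≠ 0 ∧ w ∈ q.1 := by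
  classical
  by_contra! only
  have boundary_at : graphBoundary G h w = h p := by
    rw [graphBoundary_apply, Finset.sum_eq_single_of_mem p (Finset.mem_univ p), if_pos hw]
    intro q _ hq
    by_cases hz : h q = 0 <;> simp [hz, only q hq]
  exact hp (by rw [← boundary_at, hh, Pi.zero_apply])

lemma three_le_card_support_of_graphBoundary_eq_zero {h : G.edgeSet → ZMod 2}
    (hh : graphBoundary G h = 0) (hne : h ≠ 0) : 3 ≤ #{p | h p ≠ 0} := by
  obtain ⟨⟨⟨u, v⟩, huv⟩, hp⟩ := Function.ne_iff.1 hne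
  obtain ⟨q, hq, hqh, huq⟩ :=
    exists_ne_mem_of_graphBoundary_eq_zero hh hp (Sym2.mem_mk_left u v)
  obtain ⟨q', hq', hqh', hvq'⟩ :=
    exists_ne_mem_of_graphBoundary_eq_zero hh hp (Sym2.mem_mk_right u v)
  have q_ne_q' : q ≠ q' := by
    rintro rfl
    exact hq (Subtype.ext (((Sym2.mem_and_mem_iff (G.ne_of_adj huv)).1 ⟨huq, hvq'⟩)))
  refine Finset.two_lt_card.2 ⟨_, ?_, q, ?_, q', ?_, hq.symm, hq'.symm, q_ne_q'⟩ <;>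
    simpa

/-- A spanning set of the cycle space using every edge at most twice, as is formed by the face
boundaries of a plane graph, bounds the number of edges because every cycle has length at least
three. -/
theorem card_edgeSet_le_three_mul_card [Fintype V] {R : Type*} {l r : G.edgeSet → R}
    (hlr : LinearMap.range (coboundary l r) = LinearMap.ker (graphBoundary G)) :
    Fintype.card G.edgeSet ≤ 3 * Fintype.card V := by
  have face_count := mul_finrank_range_coboundary_le (m := 3) fun f hf =>
    three_le_card_support_of_graphBoundary_eq_zero
      (LinearMap.mem_ker.1 (hlr ▸ LinearMap.mem_range_self (coboundary l r) f)) hf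
  have := card_edgeSet_le_finrank_ker_graphBoundary_add G
  rw [hlr] at face_count
  omega

end MacLane

section Grid

/-- Edges of the square grid on `ℤ × ℤ`: `(z, false)` joins `z` to `z + (1, 0)` and `(z, true)`
joins `z` to `z + (0, 1)`. -/
abbrev GridEdge := (ℤ × ℤ) × Bool

namespace GridEdge

/-- The left or lower endpoint of a grid edge. -/
def tail (d : GridEdge) : ℤ × ℤ := d.1

/-- The right or upper endpoint of a grid edge. -/
def head (d : GridEdge) : ℤ × ℤ := if d.2 then (d.1.1, d.1.2 + 1) else (d.1.1 + 1, d.1.2)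

/-- The face to the right of or above a grid edge. The face with lower left corner `z` is encoded
by `z`. -/
def nextFace (d : GridEdge) : ℤ × ℤ := d.1

/-- The face to the left of or below a grid edge. -/
def prevFace (d : GridEdge) : ℤ × ℤ := if d.2 then (d.1.1 - 1, d.1.2) else (d.1.1, d.1.2 - 1)

end GridEdge

open GridEdge

/-- The boundary operator from finite `1`-chains to `0`-chains of the grid. -/
noncomputable def gridBoundary : (GridEdge →₀ ZMod 2) →ₗ[ZMod 2] (ℤ × ℤ →₀ ZMod 2) :=
  Finsupp.lmapDomain (ZMod 2) (ZMod 2) tail + Finsupp.lmapDomain (ZMod 2) (ZMod 2) head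

lemma gridBoundary_single (d : GridEdge) (a : ZMod 2) :
    gridBoundary (Finsupp.single d a) = Finsupp.single d.tail a + Finsupp.single d.head a := by
  simp [gridBoundary]

lemma gridBoundary_apply (y : GridEdge →₀ ZMod 2) (i j : ℤ) :
    gridBoundary y (i, j) =
      y ((i, j), false) + y ((i, j), true) + y ((i - 1, j), false) + y ((i, j - 1), true) := by
  induction y using Finsupp.induction_linear with
  | zero => simp
  | add y y' hy hy' => simp only [map_add, Finsupp.add_apply, hy, hy']; ring
  | single d a =>
    obtain ⟨⟨m, n⟩, _ | _⟩ := d <;>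
      simp [gridBoundary_single, tail, head, Finsupp.single_apply, eq_sub_iff_add_eq]

lemma gridBoundary_eq_zero_of_eq_coboundary {y : GridEdge →₀ ZMod 2} {f : ℤ × ℤ → ZMod 2}
    (hy : ⇑y = coboundary nextFace prevFace f) : gridBoundary y = 0 := by
  ext ⟨i, j⟩
  simp only [gridBoundary_apply, hy, coboundary_apply, nextFace, prevFace]
  grind

lemma exists_eq_coboundary_of_gridBoundary_eq_zero {y : GridEdge →₀ ZMod 2}
    (hy : gridBoundary y = 0) : ∃ f, ⇑y = coboundary nextFace prevFace f := by
  obtain ⟨N, hN⟩ : ∃ N : ℤ, ∀ d : GridEdge, d.1.1 < N → y d = 0 := by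
    obtain ⟨N, hN⟩ := (y.support.image fun d => d.1.1).bddBelow
    exact ⟨N, fun d hd => by_contra fun h =>
      hd.not_ge (hN (Finset.mem_image_of_mem _ (Finsupp.mem_support_iff.2 h)))⟩
  let f : ℤ × ℤ → ZMod 2 := fun z => ∑ m ∈ Finset.Icc N z.1, y ((m, z.2), true)
  have f_of_lt : ∀ i j, i < N → f (i, j) = 0 := fun i j h => by simp [f, h]
  have vertical : ∀ i j, f (i, j) = f (i - 1, j) + y ((i, j), true) := by
    intro i j
    rcases lt_or_ge i N with h | h
    · rw [f_of_lt i j h, f_of_lt _ j (by omega), hN _ h, add_zero]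
    · simp only [f, ← Finset.insert_Icc_sub_one_right_eq_Icc h]
      rw [Finset.sum_insert (by simp), add_comm]
  have horizontal : ∀ i j, y ((i, j), false) = f (i, j) + f (i, j - 1) := by
    intro i j
    have before : ∀ i < N, y ((i, j), false) = f (i, j) + f (i, j - 1) := fun i h => by
      rw [f_of_lt i j h, f_of_lt i _ h, hN _ h, add_zero]
    rcases lt_or_ge i (N - 1) with h | h
    · exact before i (by omega)
    induction i, h using Int.leInduction with
    | base => exact before _ (sub_one_lt N)
    | succ i _ ih =>
      have cycle_at : gridBoundary y (i + 1, j) = 0 := by rw [hy, Finsupp.zero_apply]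
      grind [gridBoundary_apply]
  refine ⟨f, funext ?_⟩
  rintro ⟨⟨i, j⟩, _ | _⟩
  · exact horizontal i j
  · grind [coboundary_apply, nextFace, prevFace]

end Grid

section Contraction

variable {W V : Type*}

/-- The graph obtained from `H` by contracting the fibers of the partial labelling `β`, deleting the
unlabelled vertices. -/
def contractionGraph (H : SimpleGraph W) (β : W → Option V) : SimpleGraph V where
  Adj u v := u ≠ v ∧ ∃ a b, H.Adj a b ∧ β a = some u ∧ β b = some v
  symm := ⟨fun _ _ ⟨hne, a, b, hab, ha, hb⟩ => ⟨hne.symm, b, a, hab.symm, hb, ha⟩⟩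
  loopless := ⟨fun _ h => h.1 rfl⟩

/-- A partial labelling of the vertices of `H` with finite connected fibers, so that contracting the
fibers gives a minor of `H`. -/
structure IsConnectedLabelling (H : SimpleGraph W) (β : W → Option V) : Prop where
  finite_fiber : ∀ v, {a | β a = some v}.Finite
  connected_fiber : ∀ v, (H.induce {a | β a = some v}).Connected

end Contraction

section GridContraction

open GridEdge

/-- The square grid graph on `ℤ × ℤ`. -/
def gridGraph : SimpleGraph (ℤ × ℤ) :=
  SimpleGraph.fromEdgeSet (Set.range fun d : GridEdge => s(d.tail, d.head))

lemma exists_gridEdge_of_adj {a b : ℤ × ℤ} (h : gridGraph.Adj a b) :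
    ∃ d : GridEdge, s(d.tail, d.head) = s(a, b) :=
  ((SimpleGraph.fromEdgeSet_adj _).1 h).1

lemma exists_mem_supported_gridBoundary_eq {B : Set (ℤ × ℤ)}
    (hB : (gridGraph.induce B).Preconnected) (a b : B) :
    ∃ y ∈ Finsupp.supported (ZMod 2) (ZMod 2) {d : GridEdge | d.tail ∈ B ∧ d.head ∈ B},
      gridBoundary y = Finsupp.single a.1 1 + Finsupp.single b.1 1 := by
  obtain ⟨walk⟩ := hB a b
  induction walk with
  | nil => exact ⟨0, zero_mem _, by rw [ZModModule.add_self, map_zero]⟩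
  | @cons a a' b h _ ih =>
    obtain ⟨y, hy, boundary_y⟩ := ih
    obtain ⟨d, hd⟩ := exists_gridEdge_of_adj h
    have ends := Sym2.eq_iff.1 hd
    refine ⟨y + Finsupp.single d 1, add_mem hy (Finsupp.single_mem_supported _ _ ?_), ?_⟩
    · rcases ends with ⟨ht, hh⟩ | ⟨ht, hh⟩ <;> simp [ht, hh]
    · have boundary_d : gridBoundary (Finsupp.single d 1) =
          Finsupp.single a.1 1 + Finsupp.single a'.1 1 := by
        rcases ends with ⟨ht, hh⟩ | ⟨ht, hh⟩
        · rw [gridBoundary_single, ht, hh]; rfl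
        · rw [gridBoundary_single, ht, hh, add_comm]; rfl
      rw [map_add, boundary_y, boundary_d, add_comm, ZModModule.add_add_add_cancel]

variable {V : Type*} {β : ℤ × ℤ → Option V}

/-- The grid edges joining two grid points with the same label. -/
def contractedEdges (β : ℤ × ℤ → Option V) : Set GridEdge :=
  {d | ∃ v, β d.tail = some v ∧ β d.head = some v}

lemma IsConnectedLabelling.finite_contractedEdges [Finite V]
    (hβ : IsConnectedLabelling gridGraph β) : (contractedEdges β).Finite := by
  have : (⋃ v, {a | β a = some v}).Finite := Set.finite_iUnion hβ.finite_fiber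
  refine (this.prod (Set.finite_univ (α := Bool))).subset ?_
  rintro ⟨a, c⟩ ⟨v, hv, -⟩
  exact ⟨Set.mem_iUnion.2 ⟨v, hv⟩, Set.mem_univ c⟩

lemma exists_gridEdge_of_mem_edgeSet_contractionGraph {p : Sym2 V}
    (hp : p ∈ (contractionGraph gridGraph β).edgeSet) :
    ∃ (d : GridEdge) (u v : V), β d.tail = some u ∧ β d.head = some v ∧ p = s(u, v) := by
  induction p with | h u v =>
  obtain ⟨-, a, b, hab, ha, hb⟩ := hp
  obtain ⟨d, hd⟩ := exists_gridEdge_of_adj hab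
  rcases Sym2.eq_iff.1 hd with ⟨rfl, rfl⟩ | ⟨rfl, rfl⟩
  · exact ⟨d, u, v, ha, hb, rfl⟩
  · exact ⟨d, v, u, hb, ha, Sym2.eq_swap⟩

/-- A choice of a grid edge over every edge of the contraction of the grid. -/
structure EdgeSelection (β : ℤ × ℤ → Option V) where
  /-- The selected grid edge. -/
  edge : (contractionGraph gridGraph β).edgeSet → GridEdge
  /-- The label of the tail. -/
  src : (contractionGraph gridGraph β).edgeSet → V
  /-- The label of the head. -/
  dst : (contractionGraph gridGraph β).edgeSet → V
  label_tail : ∀ p, β (edge p).tail = some (src p)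
  label_head : ∀ p, β (edge p).head = some (dst p)
  coe_eq : ∀ p, p.1 = s(src p, dst p)

lemma nonempty_edgeSelection (β : ℤ × ℤ → Option V) : Nonempty (EdgeSelection β) := by
  choose e u v hu hv huv using fun p : (contractionGraph gridGraph β).edgeSet =>
    exists_gridEdge_of_mem_edgeSet_contractionGraph p.2
  exact ⟨⟨e, u, v, hu, hv, huv⟩⟩

namespace EdgeSelection

variable (E : EdgeSelection β)

lemma src_ne_dst (p) : E.src p ≠ E.dst p :=
  (contractionGraph gridGraph β).ne_of_adj (by
    rw [← SimpleGraph.mem_edgeSet, ← E.coe_eq]; exact p.2)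

lemma edge_notMem_contractedEdges (p) : E.edge p ∉ contractedEdges β := by
  rintro ⟨v, ht, hh⟩
  exact E.src_ne_dst p (Option.some_injective V
    ((E.label_tail p).symm.trans (ht.trans (hh.symm.trans (E.label_head p)))))

lemma edge_injective : Function.Injective E.edge := by
  intro p q h
  have hs := (E.label_tail p).symm.trans (h ▸ E.label_tail q)
  have hd := (E.label_head p).symm.trans (h ▸ E.label_head q)
  rw [Subtype.ext_iff, E.coe_eq p, E.coe_eq q, Option.some_injective V hs,
    Option.some_injective V hd]

/-- The edge `E.edge p` is completed to a path between the roots by paths in the fibers. -/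
lemma exists_gridBoundary_eq (hβ : IsConnectedLabelling gridGraph β) {r : V → ℤ × ℤ}
    (hr : ∀ v, β (r v) = some v) (p) :
    ∃ c ∈ Finsupp.supported (ZMod 2) (ZMod 2) (contractedEdges β),
      gridBoundary (Finsupp.single (E.edge p) 1 + c) =
        Finsupp.single (r (E.src p)) 1 + Finsupp.single (r (E.dst p)) 1 := by
  have fiber_chain (v : V) {a : ℤ × ℤ} (ha : β a = some v) :
      ∃ c ∈ Finsupp.supported (ZMod 2) (ZMod 2) (contractedEdges β),
        gridBoundary c = Finsupp.single a 1 + Finsupp.single (r v) 1 := by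
    obtain ⟨c, hc, boundary_c⟩ := exists_mem_supported_gridBoundary_eq
      (hβ.connected_fiber v).preconnected ⟨a, ha⟩ ⟨r v, hr v⟩
    exact ⟨c, Finsupp.supported_mono (t := contractedEdges β) (fun d hd => ⟨v, hd⟩) hc, boundary_c⟩
  obtain ⟨c, hc, boundary_c⟩ := fiber_chain _ (E.label_tail p)
  obtain ⟨c', hc', boundary_c'⟩ := fiber_chain _ (E.label_head p)
  refine ⟨c + c', add_mem hc hc', ?_⟩
  let r₁ := Finsupp.single (r (E.src p)) (1 : ZMod 2)
  let r₂ := Finsupp.single (r (E.dst p)) (1 : ZMod 2)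
  let t := Finsupp.single (E.edge p).tail (1 : ZMod 2)
  let h := Finsupp.single (E.edge p).head (1 : ZMod 2)
  calc gridBoundary (Finsupp.single (E.edge p) 1 + (c + c'))
      = (t + h) + ((t + r₁) + (h + r₂)) := by
        rw [map_add, map_add, gridBoundary_single, boundary_c, boundary_c']
    _ = ((r₁ + t) + (t + h)) + (h + r₂) := by abel
    _ = r₁ + r₂ := by rw [ZModModule.add_add_add_cancel, ZModModule.add_add_add_cancel]

variable [Fintype (contractionGraph gridGraph β).edgeSet]

lemma mapDomain_gridBoundary {y : GridEdge →₀ ZMod 2}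
    (hy : y ∈ Finsupp.supported (ZMod 2) (ZMod 2) (contractedEdges β ∪ Set.range E.edge)) (w : V) :
    (gridBoundary y).mapDomain β (some w) = graphBoundary _ (fun p => y (E.edge p)) w := by
  classical
  rw [Finsupp.supported_eq_span_single] at hy
  induction hy using Submodule.span_induction with
  | zero => exact (congrFun (map_zero (graphBoundary _)) w).symm
  | add y y' _ _ hy hy' =>
    rw [map_add, Finsupp.mapDomain_add, Finsupp.add_apply, hy, hy', ← Pi.add_apply, ← map_add]
    rfl
  | smul a y _ hy =>
    rw [map_smul, Finsupp.mapDomain_smul, Finsupp.smul_apply, hy, ← Pi.smul_apply, ← map_smul]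
    rfl
  | mem y hy =>
    obtain ⟨d, hd | ⟨p, rfl⟩, rfl⟩ := hy
    · have vanish : (fun p => Finsupp.single d (1 : ZMod 2) (E.edge p)) = 0 := funext fun p =>
        Finsupp.single_eq_of_ne fun h => E.edge_notMem_contractedEdges p (h ▸ hd)
      obtain ⟨v, ht, hh⟩ := hd
      rw [vanish, map_zero, gridBoundary_single, Finsupp.mapDomain_add, Finsupp.mapDomain_single,
        Finsupp.mapDomain_single, ht, hh, ZModModule.add_self]
      rfl
    · have single :
          (fun q => Finsupp.single (E.edge p) (1 : ZMod 2) (E.edge q)) = Pi.single p 1 := by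
        ext q
        simp [Finsupp.single_apply, Pi.single_apply, E.edge_injective.eq_iff, eq_comm]
      rw [single, graphBoundary_single (E.coe_eq p), gridBoundary_single, Finsupp.mapDomain_add,
        Finsupp.mapDomain_single, Finsupp.mapDomain_single, E.label_tail, E.label_head]
      simp [Finsupp.single_apply, Pi.single_apply, eq_comm]

lemma exists_cycle_of_graphBoundary_eq_zero [Finite V] (hβ : IsConnectedLabelling gridGraph β)
    {h : (contractionGraph gridGraph β).edgeSet → ZMod 2} (hh : graphBoundary _ h = 0) :
    ∃ y ∈ Finsupp.supported (ZMod 2) (ZMod 2) (contractedEdges β ∪ Set.range E.edge),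
      gridBoundary y = 0 ∧ ∀ p, y (E.edge p) = h p := by
  classical
  cases nonempty_fintype V
  choose r hr using fun v => Set.nonempty_coe_sort.1 (hβ.connected_fiber v).nonempty
  choose c hc boundary_c using E.exists_gridBoundary_eq hβ hr
  let lift := Fintype.linearCombination (ZMod 2) fun p => Finsupp.single (E.edge p) 1 + c p
  let toRoots := Fintype.linearCombination (ZMod 2) fun v => Finsupp.single (r v) (1 : ZMod 2)
  have boundary_lift : gridBoundary ∘ₗ lift = toRoots ∘ₗ graphBoundary _ := by
    refine LinearMap.pi_ext' fun p => LinearMap.ext_ring ?_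
    simp [lift, toRoots, graphBoundary_single (E.coe_eq p), boundary_c,
      map_add (Fintype.linearCombination _ _)]
  refine ⟨lift h, ?_, ?_, fun p => ?_⟩
  · refine Submodule.sum_mem _ fun p _ => Submodule.smul_mem _ _ (add_mem ?_ ?_)
    · exact Finsupp.single_mem_supported _ _ (Or.inr ⟨p, rfl⟩)
    · exact Finsupp.supported_mono Set.subset_union_left (hc p)
  · rw [← LinearMap.comp_apply, boundary_lift, LinearMap.comp_apply, hh, map_zero]
  · have c_edge (q) : c q (E.edge p) = 0 := by
      by_contra hne
      exact E.edge_notMem_contractedEdges p (hc q (Finsupp.mem_support_iff.2 hne))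
    simp [lift, Fintype.linearCombination_apply, c_edge, Finsupp.single_apply,
      E.edge_injective.eq_iff]

/-- The regions of the plane cut out by the contracted edges and the selected edges, as classes of
grid faces. -/
abbrev Region : Type :=
  Quot fun a b => ∃ d ∉ contractedEdges β ∪ Set.range E.edge, d.nextFace = a ∧ d.prevFace = b

/-- The region next to a selected edge. -/
def nextRegion (p : (contractionGraph gridGraph β).edgeSet) : E.Region :=
  Quot.mk _ (E.edge p).nextFace

/-- The region on the other side of a selected edge. -/
def prevRegion (p : (contractionGraph gridGraph β).edgeSet) : E.Region :=
  Quot.mk _ (E.edge p).prevFace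

lemma range_coboundary_le_ker_graphBoundary [Finite V] (hβ : IsConnectedLabelling gridGraph β) :
    LinearMap.range (coboundary E.nextRegion E.prevRegion) ≤ LinearMap.ker (graphBoundary _) := by
  rintro _ ⟨f, rfl⟩
  let g : ℤ × ℤ → ZMod 2 := fun a => f (Quot.mk _ a)
  have support_subset : Function.support (coboundary nextFace prevFace g) ⊆
      contractedEdges β ∪ Set.range E.edge := fun d => by
    contrapose!
    intro hd
    have : g d.nextFace = g d.prevFace := congrArg f (Quot.sound ⟨d, hd, rfl, rfl⟩)
    rw [Function.notMem_support, coboundary_apply, this, CharTwo.add_self_eq_zero]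
  let y := Finsupp.ofSupportFinite (coboundary nextFace prevFace g)
    ((hβ.finite_contractedEdges.union (Set.finite_range E.edge)).subset support_subset)
  have y_cycle : gridBoundary y = 0 := gridBoundary_eq_zero_of_eq_coboundary (f := g) rfl
  have y_supported : y ∈ Finsupp.supported (ZMod 2) (ZMod 2)
      (contractedEdges β ∪ Set.range E.edge) := fun d hd =>
    support_subset (Finsupp.mem_support_iff.1 hd)
  refine LinearMap.mem_ker.2 (funext fun w => ?_)
  have push := E.mapDomain_gridBoundary y_supported w
  rw [y_cycle, Finsupp.mapDomain_zero, Finsupp.zero_apply] at push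
  exact push.symm

lemma ker_graphBoundary_le_range_coboundary [Finite V] (hβ : IsConnectedLabelling gridGraph β) :
    LinearMap.ker (graphBoundary _) ≤ LinearMap.range (coboundary E.nextRegion E.prevRegion) := by
  intro h hh
  obtain ⟨y, hy, y_cycle, y_edge⟩ := E.exists_cycle_of_graphBoundary_eq_zero hβ hh
  obtain ⟨g, hg⟩ := exists_eq_coboundary_of_gridBoundary_eq_zero y_cycle
  refine ⟨Quot.lift g ?_, funext fun p => ?_⟩
  · rintro _ _ ⟨d, hd, rfl, rfl⟩
    have y_eq_zero : y d = 0 := by_contra fun hne => hd (hy (Finsupp.mem_support_iff.2 hne))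
    rw [hg] at y_eq_zero
    exact CharTwo.add_eq_zero.1 y_eq_zero
  · exact (congrFun hg (E.edge p)).symm.trans (y_edge p)

end EdgeSelection

theorem card_edgeSet_contractionGraph_le [Fintype V]
    [Fintype (contractionGraph gridGraph β).edgeSet] (hβ : IsConnectedLabelling gridGraph β) :
    Fintype.card (contractionGraph gridGraph β).edgeSet ≤ 3 * Fintype.card V := by
  obtain ⟨E⟩ := nonempty_edgeSelection β
  exact card_edgeSet_le_three_mul_card (le_antisymm (E.range_coboundary_le_ker_graphBoundary hβ)
    (E.ker_graphBoundary_le_range_coboundary hβ))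

end GridContraction

section Labelling

variable {W V K : Type*} {H : SimpleGraph W} {inc : K → V → Prop} {patch : V → Set W}
  {block : K → Set W} {β : W → Option V}

/-- A realization of an incidence relation by sets: every block contains exactly the patches it is
incident to, and different blocks meet only inside patches. -/
structure IsRealization {X : Type*} (inc : K → V → Prop) (patch : V → Set X)
    (block : K → Set X) : Prop where
  pairwise_disjoint : Pairwise (Function.onFun Disjoint patch)
  patch_subset : ∀ C D, inc C D → patch D ⊆ block C
  disjoint_of_not_inc : ∀ C D, ¬inc C D → Disjoint (block C) (patch D)
  inter_subset : ∀ C C', C ≠ C' → block C ∩ block C' ⊆ ⋃ D, patch D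
  exists_inc : ∀ C, ∃ D, inc C D

/-- A connected partial labelling that extends the tautological labelling of the patches and such
that the labels in a block are incident to it. -/
structure IsCompatibleLabelling (H : SimpleGraph W) (inc : K → V → Prop) (patch : V → Set W)
    (block : K → Set W) (β : W → Option V) : Prop extends IsConnectedLabelling H β where
  label_patch : ∀ D, ∀ a ∈ patch D, β a = some D
  inc_of_label : ∀ C D, ∀ a ∈ block C, β a = some D → inc C D

lemma IsRealization.exists_isCompatibleLabelling (h : IsRealization inc patch block)
    (patch_finite : ∀ D, (patch D).Finite) (patch_connected : ∀ D, (H.induce (patch D)).Connected) :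
    ∃ β, IsCompatibleLabelling H inc patch block β := by
  classical
  let β : W → Option V := fun a => if ha : ∃ D, a ∈ patch D then some ha.choose else none
  have label_patch : ∀ D, ∀ a ∈ patch D, β a = some D := fun D a ha => by
    have hex : ∃ D, a ∈ patch D := ⟨D, ha⟩
    simp only [β, dif_pos hex, Option.some.injEq]
    exact h.pairwise_disjoint.eq (Set.not_disjoint_iff.2 ⟨a, hex.choose_spec, ha⟩)
  have mem_patch : ∀ D a, β a = some D → a ∈ patch D := fun D a ha => by
    by_cases hex : ∃ D, a ∈ patch D
    · obtain ⟨D', ha'⟩ := hex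
      rwa [Option.some_injective _ (ha.symm.trans (label_patch D' a ha'))]
    · simp [β, hex] at ha
  have fiber_eq : ∀ D, {a | β a = some D} = patch D := fun D =>
    Set.ext fun a => ⟨mem_patch D a, label_patch D a⟩
  refine ⟨β, ⟨⟨fun D => ?_, fun D => ?_⟩, label_patch, fun C D a ha hβ => ?_⟩⟩
  · rw [fiber_eq]; exact patch_finite D
  · rw [fiber_eq]; exact patch_connected D
  · by_contra hinc
    exact (h.disjoint_of_not_inc C D hinc).notMem_of_mem_left ha (mem_patch D a hβ)

lemma exists_adj_mem_notMem_of_preconnected {B S : Set W} (hB : (H.induce B).Preconnected) {a b : W}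
    (ha : a ∈ B ∩ S) (hb : b ∈ B \ S) : ∃ a' ∈ B ∩ S, ∃ b' ∈ B \ S, H.Adj a' b' := by
  obtain ⟨walk⟩ := hB ⟨a, ha.1⟩ ⟨b, hb.1⟩
  obtain ⟨d, -, h1, h2⟩ := walk.exists_boundary_dart (Subtype.val ⁻¹' S) ha.2 hb.2
  exact ⟨d.fst, ⟨d.fst.2, h1⟩, d.snd, ⟨d.snd.2, h2⟩, d.adj⟩

lemma IsConnectedLabelling.update [DecidableEq W] (hβ : IsConnectedLabelling H β) {a b : W} {v : V}
    (hab : H.Adj a b) (ha : β a = some v) (hb : β b = none) :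
    IsConnectedLabelling H (Function.update β b (some v)) := by
  have fiber_eq : {c | Function.update β b (some v) c = some v} = {c | β c = some v} ∪ {a, b} := by
    ext c
    by_cases hc : c = b <;> simp_all [Function.update_apply]
  have fiber_eq_of_ne : ∀ w ≠ v,
      {c | Function.update β b (some v) c = some w} = {c | β c = some w} := by
    intro w hw
    ext c
    by_cases hc : c = b <;> simp_all [Function.update_apply, eq_comm]
  constructor <;> intro w <;> by_cases hw : w = v
  · subst hw
    rw [fiber_eq]
    exact (hβ.finite_fiber w).union (Set.toFinite _)
  · rw [fiber_eq_of_ne w hw]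
    exact hβ.finite_fiber w
  · subst hw
    rw [fiber_eq]
    exact SimpleGraph.induce_union_connected (hβ.connected_fiber w).preconnected
      (SimpleGraph.induce_pair_connected_of_adj hab).preconnected ⟨a, ha, by simp⟩
  · rw [fiber_eq_of_ne w hw]
    exact hβ.connected_fiber w

/-- Inside a block, a label spreads to an adjacent unlabelled vertex. As it lies in no other block,
compatibility is preserved. -/
lemma IsCompatibleLabelling.exists_update [DecidableEq W] (h : IsRealization inc patch block)
    (hβ : IsCompatibleLabelling H inc patch block β) (patch_nonempty : ∀ D, (patch D).Nonempty)
    {C : K} (hC : (H.induce (block C)).Preconnected) {a : W} (ha : a ∈ block C)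
    (hnone : β a = none) :
    ∃ b ∈ block C, β b = none ∧
      ∃ D, IsCompatibleLabelling H inc patch block (Function.update β b (some D)) := by
  obtain ⟨D₀, hD₀⟩ := h.exists_inc C
  obtain ⟨a₀, ha₀⟩ := patch_nonempty D₀
  obtain ⟨c, ⟨hcC, hc⟩, b, ⟨hbC, hb⟩, hcb⟩ := exists_adj_mem_notMem_of_preconnected
    (S := {a | β a ≠ none}) hC
    ⟨h.patch_subset C D₀ hD₀ ha₀, by simp [hβ.label_patch D₀ a₀ ha₀]⟩ ⟨ha, by simpa using hnone⟩
  obtain ⟨D, hD⟩ := Option.ne_none_iff_exists'.1 hc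
  replace hb : β b = none := by simpa using hb
  refine ⟨b, hbC, hb, D, ⟨hβ.toIsConnectedLabelling.update hcb hD hb, fun D' x hx => ?_,
    fun C' D' x hx hlabel => ?_⟩⟩
  · have x_ne_b : x ≠ b := by
      rintro rfl
      simp [hβ.label_patch D' x hx] at hb
    rw [Function.update_of_ne x_ne_b, hβ.label_patch D' x hx]
  · by_cases hxb : x = b
    · subst hxb
      have C_eq : C' = C := by
        by_contra hne
        obtain ⟨D'', hx'⟩ := Set.mem_iUnion.1 (h.inter_subset C' C hne ⟨hx, hbC⟩)
        simp [hβ.label_patch D'' x hx'] at hb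
      rw [Function.update_self, Option.some.injEq] at hlabel
      rw [C_eq, ← hlabel]
      exact hβ.inc_of_label C D c hcC hD
    · rw [Function.update_of_ne hxb] at hlabel
      exact hβ.inc_of_label C' D' x hx hlabel

theorem IsRealization.exists_isCompatibleLabelling_total [Finite K]
    (h : IsRealization inc patch block)
    (patch_finite : ∀ D, (patch D).Finite) (patch_connected : ∀ D, (H.induce (patch D)).Connected)
    (block_finite : ∀ C, (block C).Finite)
    (block_preconnected : ∀ C, (H.induce (block C)).Preconnected) :
    ∃ β, IsCompatibleLabelling H inc patch block β ∧ ∀ C, ∀ a ∈ block C, β a ≠ none := by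
  classical
  let unlabelled (β : W → Option V) : Set W := {a ∈ ⋃ C, block C | β a = none}
  obtain ⟨β, hβ, minimal⟩ := exists_minimalFor_of_wellFoundedLT
    (IsCompatibleLabelling H inc patch block) (fun β => (unlabelled β).ncard)
    (h.exists_isCompatibleLabelling patch_finite patch_connected)
  refine ⟨β, hβ, fun C a ha hnone => ?_⟩
  obtain ⟨b, hbC, hb, D, hβ'⟩ := hβ.exists_update h
    (fun D => Set.nonempty_coe_sort.1 (patch_connected D).nonempty) (block_preconnected C) ha hnone
  have ssubset : unlabelled (Function.update β b (some D)) ⊂ unlabelled β := by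
    refine (Set.ssubset_iff_of_subset ?_).2
      ⟨b, ⟨Set.mem_iUnion.2 ⟨C, hbC⟩, hb⟩, by simp [unlabelled]⟩
    rintro c ⟨hc, hcnone⟩
    refine ⟨hc, ?_⟩
    by_cases hcb : c = b
    · rwa [hcb]
    · rwa [Function.update_of_ne hcb] at hcnone
  have lt := Set.ncard_lt_ncard ssubset ((Set.finite_iUnion block_finite).subset fun _ hc => hc.1)
  exact lt.not_ge (minimal hβ' lt.le)

lemma preconnected_induce_contractionGraph {B : Set W} {T : Set V} (hB : (H.induce B).Preconnected)
    (hβ : ∀ a ∈ B, ∃ v ∈ T, β a = some v) (hT : ∀ v ∈ T, ∃ a ∈ B, β a = some v) :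
    ((contractionGraph H β).induce T).Preconnected := by
  have reachable_of_walk : ∀ {x y : B}, (H.induce B).Walk x y → ∀ u v : T, β x = some u.1 →
      β y = some v.1 → ((contractionGraph H β).induce T).Reachable u v := by
    intro x y walk
    induction walk with
    | nil =>
      intro u v hu hv
      rw [Subtype.ext (Option.some_injective V (hu.symm.trans hv))]
    | @cons x x' y hadj _ ih =>
      intro u v hu hv
      obtain ⟨w, hw, hx'⟩ := hβ x' x'.2
      refine .trans ?_ (ih ⟨w, hw⟩ v hx' hv)
      by_cases huw : u = ⟨w, hw⟩
      · rw [huw]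
      · exact SimpleGraph.Adj.reachable ⟨Subtype.coe_ne_coe.2 huw, x, x', hadj, hu, hx'⟩
  intro u v
  obtain ⟨a, ha, hau⟩ := hT u u.2
  obtain ⟨b, hb, hbv⟩ := hT v v.2
  obtain ⟨walk⟩ := hB ⟨a, ha⟩ ⟨b, hb⟩
  exact reachable_of_walk walk u v hau hbv

end Labelling

section Topology

open Set Topology

lemma exists_isCompact_isConnected_subset_interior {X : Type*} [TopologicalSpace X] [T2Space X]
    [LocallyCompactSpace X] [LocallyPathConnectedSpace X] {D S : Set X} (hD : IsOpen D)
    (hDconn : IsPathConnected D) (hS : IsCompact S) (hSD : S ⊆ D) :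
    ∃ K, IsCompact K ∧ IsConnected K ∧ K ⊆ D ∧ S ⊆ interior K := by
  obtain ⟨p, hp⟩ := hDconn.nonempty
  suffices ∃ K, IsCompact K ∧ IsPreconnected K ∧ K ⊆ D ∧ p ∈ K ∧ S ⊆ interior K by
    obtain ⟨K, compact, preconn, hKD, hpK, hSK⟩ := this
    exact ⟨K, compact, ⟨⟨p, hpK⟩, preconn⟩, hKD, hSK⟩
  refine hS.induction_on ?_ ?_ ?_ ?_
  · exact ⟨{p}, isCompact_singleton, isPreconnected_singleton, by simpa using hp, rfl,
      empty_subset _⟩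
  · rintro S T hST ⟨K, compact, preconn, hKD, hpK, hTK⟩
    exact ⟨K, compact, preconn, hKD, hpK, hST.trans hTK⟩
  · rintro S T ⟨K, compact, preconn, hKD, hpK, hSK⟩ ⟨L, compact', preconn', hLD, hpL, hTL⟩
    exact ⟨K ∪ L, compact.union compact', preconn.union p hpK hpL preconn', union_subset hKD hLD,
      .inl hpK, union_subset (hSK.trans (interior_mono subset_union_left))
        (hTL.trans (interior_mono subset_union_right))⟩
  · intro x hx
    obtain ⟨N, compact, hxN, hND⟩ := exists_compact_subset hD (hSD hx)
    have path := hDconn.joinedIn p hp x (hSD hx)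
    let U := pathComponentIn (interior N) x
    have U_mem : U ∈ 𝓝 x :=
      (isOpen_interior.pathComponentIn x).mem_nhds (mem_pathComponentIn_self hxN)
    have closure_subset : closure U ⊆ N :=
      closure_minimal (pathComponentIn_subset.trans interior_subset) compact.isClosed
    refine ⟨U, mem_nhdsWithin_of_mem_nhds U_mem, range path.somePath ∪ closure U,
      (isCompact_range path.somePath.continuous).union
        (compact.of_isClosed_subset isClosed_closure closure_subset),
      (isPreconnected_range path.somePath.continuous).union x ⟨1, path.somePath.target⟩
        (subset_closure (mem_pathComponentIn_self hxN))
        (isPathConnected_pathComponentIn hxN).isConnected.isPreconnected.closure,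
      union_subset (range_subset_iff.2 path.somePath_mem) (closure_subset.trans hND),
      .inl ⟨0, path.somePath.source⟩, ?_⟩
    exact interior_maximal (subset_closure.trans subset_union_right)
      (isOpen_interior.pathComponentIn x)

variable {X V K : Type*} [TopologicalSpace X] {inc : K → V → Prop} {patch patchCore : V → Set X}
  {block blockCore : K → Set X}

/-- Compact connected subsets of the patches and blocks that still witness all incidences, such that
different block cores meet only in the interiors of patch cores. -/
structure IsCompactCore (inc : K → V → Prop) (patch : V → Set X) (block : K → Set X)
    (patchCore : V → Set X) (blockCore : K → Set X) : Prop where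
  isCompact_patchCore : ∀ D, IsCompact (patchCore D)
  isConnected_patchCore : ∀ D, IsConnected (patchCore D)
  patchCore_subset : ∀ D, patchCore D ⊆ patch D
  isCompact_blockCore : ∀ C, IsCompact (blockCore C)
  isConnected_blockCore : ∀ C, IsConnected (blockCore C)
  blockCore_subset : ∀ C, blockCore C ⊆ block C
  inter_nonempty : ∀ C D, inc C D → (blockCore C ∩ patchCore D).Nonempty
  inter_subset : ∀ C C', C ≠ C' → blockCore C ∩ blockCore C' ⊆ ⋃ D, interior (patchCore D)

lemma IsRealization.isCompact_inter_inter_patch [T2Space X] (h : IsRealization inc patch block)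
    (patch_open : ∀ D, IsOpen (patch D)) (blockCore_compact : ∀ C, IsCompact (blockCore C))
    (blockCore_subset : ∀ C, blockCore C ⊆ block C) {C C' : K} (hne : C ≠ C') (D : V) :
    IsCompact (blockCore C ∩ blockCore C' ∩ patch D) := by
  have eq_diff : blockCore C ∩ blockCore C' ∩ patch D =
      (blockCore C ∩ blockCore C') \ ⋃ D' ≠ D, patch D' := by
    ext x
    simp only [mem_inter_iff, mem_sdiff, mem_iUnion, not_exists]
    refine and_congr_right fun hx => ⟨fun hxD D' hne' hxD' => ?_, fun hxD => ?_⟩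
    · exact (h.pairwise_disjoint hne').notMem_of_mem_left hxD' hxD
    · obtain ⟨D', hD'⟩ := mem_iUnion.1
        (h.inter_subset C C' hne ⟨blockCore_subset C hx.1, blockCore_subset C' hx.2⟩)
      by_contra hxD''
      exact hxD D' (by rintro rfl; exact hxD'' hD') hD'
  rw [eq_diff]
  exact ((blockCore_compact C).inter (blockCore_compact C')).diff
    (isOpen_biUnion fun D' _ => patch_open D')

lemma IsRealization.exists_isCompactCore [T2Space X] [LocallyCompactSpace X]
    [LocallyPathConnectedSpace X] [Finite V] [Finite K] (h : IsRealization inc patch block)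
    (patch_open : ∀ D, IsOpen (patch D)) (patch_connected : ∀ D, IsPathConnected (patch D))
    (block_open : ∀ C, IsOpen (block C)) (block_connected : ∀ C, IsPathConnected (block C)) :
    ∃ patchCore blockCore, IsCompactCore inc patch block patchCore blockCore := by
  choose p hp using fun D => (patch_connected D).nonempty
  have exists_blockCore := fun C => exists_isCompact_isConnected_subset_interior
    (block_open C) (block_connected C) ((toFinite {D | inc C D}).image p).isCompact
    (image_subset_iff.2 fun D hD => h.patch_subset C D hD (hp D))
  choose blockCore compact connected subset points_subset using exists_blockCore
  have exists_patchCore := fun D => exists_isCompact_isConnected_subset_interior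
    (S := {p D} ∪ ⋃ q : {q : K × K // q.1 ≠ q.2}, blockCore q.1.1 ∩ blockCore q.1.2 ∩ patch D)
    (patch_open D) (patch_connected D)
    (isCompact_singleton.union
      (isCompact_iUnion fun q => h.isCompact_inter_inter_patch patch_open compact subset q.2 D))
    (union_subset (singleton_subset_iff.2 (hp D)) (iUnion_subset fun _ => inter_subset_right))
  choose patchCore compact' connected' subset' overlap_subset using exists_patchCore
  refine ⟨patchCore, blockCore, compact', connected', subset', compact, connected, subset,
    fun C D hD => ?_, fun C C' hne x hx => ?_⟩
  · exact ⟨p D, interior_subset (points_subset C ⟨D, hD, rfl⟩),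
      interior_subset (overlap_subset D (.inl rfl))⟩
  · obtain ⟨D, hD⟩ := mem_iUnion.1
      (h.inter_subset C C' hne ⟨subset C hx.1, subset C' hx.2⟩)
    exact mem_iUnion.2 ⟨D, overlap_subset D (.inr (mem_iUnion.2 ⟨⟨(C, C'), hne⟩, hx, hD⟩))⟩

/-- The core of the block `C` enlarged by the cores of all patches incident to it. -/
def filledCore (inc : K → V → Prop) (patchCore : V → Set X) (blockCore : K → Set X) (C : K) :
    Set X :=
  blockCore C ∪ ⋃ D : {D | inc C D}, patchCore D

namespace IsCompactCore

variable (core : IsCompactCore inc patch block patchCore blockCore) (C : K)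

include core

lemma isCompact_filledCore [Finite V] : IsCompact (filledCore inc patchCore blockCore C) :=
  (core.isCompact_blockCore C).union (isCompact_iUnion fun D => core.isCompact_patchCore D)

lemma isPreconnected_filledCore : IsPreconnected (filledCore inc patchCore blockCore C) := by
  obtain ⟨p, hp⟩ := (core.isConnected_blockCore C).nonempty
  have preconnected := (core.isConnected_blockCore C).isPreconnected
  refine isPreconnected_of_forall p ?_
  rintro y (hy | hy)
  · exact ⟨blockCore C, subset_union_left, hp, hy, preconnected⟩
  · obtain ⟨D, hD⟩ := mem_iUnion.1 hy
    exact ⟨blockCore C ∪ patchCore D, union_subset_union_right _ (subset_iUnion_of_subset D le_rfl),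
      .inl hp, .inr hD, preconnected.union' (core.inter_nonempty C D D.2)
        (core.isConnected_patchCore D).isPreconnected⟩

lemma filledCore_subset (h : IsRealization inc patch block) :
    filledCore inc patchCore blockCore C ⊆ block C :=
  union_subset (core.blockCore_subset C)
    (iUnion_subset fun D => (core.patchCore_subset D).trans (h.patch_subset C D D.2))

end IsCompactCore

end Topology

section Discretization

open Set Topology

/-- The open square of side `2 * ε` around the point `ε * z` of the plane. These squares overlap, so
that they cover the plane. -/
def square (ε : ℝ) (z : ℤ × ℤ) : Set (EuclideanSpace ℝ (Fin 2)) :=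
  {x | |x 0 - ε * z.1| < ε ∧ |x 1 - ε * z.2| < ε}

/-- The discretization of `K` at scale `ε`: the grid points whose squares meet `K`. -/
def gridTrace (ε : ℝ) (K : Set (EuclideanSpace ℝ (Fin 2))) : Set (ℤ × ℤ) :=
  {z | (square ε z ∩ K).Nonempty}

variable {ε : ℝ} {K L M : Set (EuclideanSpace ℝ (Fin 2))}

lemma isOpen_square (ε : ℝ) (z : ℤ × ℤ) : IsOpen (square ε z) := by
  have isOpen_strip : ∀ (i : Fin 2) (c : ℝ),
      IsOpen {x : EuclideanSpace ℝ (Fin 2) | |x i - c| < ε} :=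
    fun i c => isOpen_lt (by fun_prop) continuous_const
  exact (isOpen_strip 0 _).inter (isOpen_strip 1 _)

lemma exists_mem_square (hε : 0 < ε) (x : EuclideanSpace ℝ (Fin 2)) : ∃ z, x ∈ square ε z := by
  have exists_near : ∀ a : ℝ, ∃ i : ℤ, |a - ε * i| < ε := fun a => by
    refine ⟨⌊a / ε⌋, ?_⟩
    have fract_eq : a - ε * ⌊a / ε⌋ = ε * Int.fract (a / ε) := by
      rw [Int.fract, mul_sub, mul_div_cancel₀ _ hε.ne']
    rw [fract_eq, abs_of_nonneg (mul_nonneg hε.le (Int.fract_nonneg _))]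
    exact mul_lt_of_lt_one_right hε (Int.fract_lt_one _)
  obtain ⟨i, hi⟩ := exists_near (x 0)
  obtain ⟨j, hj⟩ := exists_near (x 1)
  exact ⟨(i, j), hi, hj⟩

lemma dist_lt_of_mem_square {x y : EuclideanSpace ℝ (Fin 2)} {z : ℤ × ℤ} (hx : x ∈ square ε z)
    (hy : y ∈ square ε z) : dist x y < 4 * ε := by
  have coord_lt : ∀ {a b c : ℝ}, |a - c| < ε → |b - c| < ε → |a - b| < 2 * ε := fun {a b c} ha hb =>
    calc |a - b| ≤ |a - c| + |c - b| := abs_sub_le a c b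
      _ < 2 * ε := by rw [abs_sub_comm c b]; linarith
  calc dist x y ≤ |x 0 - y 0| + |x 1 - y 1| := by
        rw [EuclideanSpace.dist_eq, Fin.sum_univ_two, Real.dist_eq, Real.dist_eq]
        exact Real.sqrt_le_iff.2 ⟨by positivity,
          by nlinarith [mul_nonneg (abs_nonneg (x 0 - y 0)) (abs_nonneg (x 1 - y 1))]⟩
    _ < 4 * ε := by linarith [coord_lt hx.1 hy.1, coord_lt hx.2 hy.2]

lemma abs_sub_le_one_of_abs_sub_mul_lt {a : ℝ} {i j : ℤ} (hi : |a - ε * i| < ε)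
    (hj : |a - ε * j| < ε) : |i - j| ≤ 1 := by
  have hε : 0 < ε := (abs_nonneg _).trans_lt hi
  have mul_lt : ε * |(i : ℝ) - j| < ε * 2 :=
    calc ε * |(i : ℝ) - j| = |(a - ε * j) - (a - ε * i)| := by
          rw [sub_sub_sub_cancel_left, ← mul_sub, abs_mul, abs_of_pos hε]
      _ ≤ |a - ε * j| + |a - ε * i| := abs_sub _ _
      _ < ε * 2 := by linarith
  have lt_two : |i - j| < 2 := by exact_mod_cast lt_of_mul_lt_mul_left mul_lt hε.le
  exact Int.lt_add_one_iff.1 lt_two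

lemma gridTrace_mono (h : K ⊆ L) : gridTrace ε K ⊆ gridTrace ε L :=
  fun _ hz => hz.mono (inter_subset_inter_right _ h)

lemma gridTrace_union : gridTrace ε (K ∪ L) = gridTrace ε K ∪ gridTrace ε L := by
  ext z
  simp only [gridTrace, inter_union_distrib_left, union_nonempty, mem_ofPred_eq, mem_union]

lemma nonempty_gridTrace (hε : 0 < ε) (hK : K.Nonempty) : (gridTrace ε K).Nonempty := by
  obtain ⟨x, hx⟩ := hK
  obtain ⟨z, hz⟩ := exists_mem_square hε x
  exact ⟨z, x, hz, hx⟩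

lemma finite_gridTrace_square (z : ℤ × ℤ) : (gridTrace ε (square ε z)).Finite := by
  refine (finite_Icc (z - 1) (z + 1)).subset ?_
  rintro w ⟨x, hw, hz⟩
  have h₁ := abs_le.1 (abs_sub_le_one_of_abs_sub_mul_lt hw.1 hz.1)
  have h₂ := abs_le.1 (abs_sub_le_one_of_abs_sub_mul_lt hw.2 hz.2)
  simp only [mem_Icc, Prod.le_def, Prod.fst_sub, Prod.snd_sub, Prod.fst_add, Prod.snd_add,
    Prod.fst_one, Prod.snd_one]
  omega

lemma finite_gridTrace (hε : 0 < ε) (hK : IsCompact K) : (gridTrace ε K).Finite := by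
  refine hK.induction_on ?_ ?_ ?_ ?_
  · simp [gridTrace]
  · exact fun K L hKL hL => hL.subset (gridTrace_mono hKL)
  · exact fun K L hK hL => gridTrace_union ▸ hK.union hL
  · intro x _
    obtain ⟨z, hz⟩ := exists_mem_square hε x
    exact ⟨square ε z, mem_nhdsWithin_of_mem_nhds ((isOpen_square ε z).mem_nhds hz),
      finite_gridTrace_square z⟩

lemma gridGraph_adj_of_abs_sub_le_one_left {i j : ℤ} (l : ℤ) (h : |i - j| ≤ 1) (hne : i ≠ j) :
    gridGraph.Adj (i, l) (j, l) := by
  refine (SimpleGraph.fromEdgeSet_adj _).2 ⟨?_, by simpa using hne⟩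
  rcases (by rw [abs_le] at h; omega : j = i + 1 ∨ i = j + 1) with rfl | rfl
  · exact ⟨((i, l), false), by simp [GridEdge.tail, GridEdge.head]⟩
  · exact ⟨((j, l), false), by simp [GridEdge.tail, GridEdge.head, Sym2.eq_swap]⟩

lemma gridGraph_adj_of_abs_sub_le_one_right {i j : ℤ} (l : ℤ) (h : |i - j| ≤ 1) (hne : i ≠ j) :
    gridGraph.Adj (l, i) (l, j) := by
  refine (SimpleGraph.fromEdgeSet_adj _).2 ⟨?_, by simpa using hne⟩
  rcases (by rw [abs_le] at h; omega : j = i + 1 ∨ i = j + 1) with rfl | rfl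
  · exact ⟨((l, i), true), by simp [GridEdge.tail, GridEdge.head]⟩
  · exact ⟨((l, j), true), by simp [GridEdge.tail, GridEdge.head, Sym2.eq_swap]⟩

/-- Overlapping squares need not be adjacent in the grid, but then a third square, adjacent to both,
contains the same point. -/
lemma reachable_gridTrace_of_mem {x : EuclideanSpace ℝ (Fin 2)} (hx : x ∈ K) {z w : ℤ × ℤ}
    (hz : x ∈ square ε z) (hw : x ∈ square ε w) :
    (gridGraph.induce (gridTrace ε K)).Reachable ⟨z, x, hz, hx⟩ ⟨w, x, hw, hx⟩ := by
  have hm : x ∈ square ε (w.1, z.2) := ⟨hw.1, hz.2⟩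
  have horizontal : (gridGraph.induce (gridTrace ε K)).Reachable ⟨z, x, hz, hx⟩
      ⟨(w.1, z.2), x, hm, hx⟩ := by
    by_cases h : z.1 = w.1
    · simp only [← h]; rfl
    · exact SimpleGraph.Adj.reachable (gridGraph_adj_of_abs_sub_le_one_left z.2
        (abs_sub_le_one_of_abs_sub_mul_lt hz.1 hw.1) h)
  have vertical : (gridGraph.induce (gridTrace ε K)).Reachable ⟨(w.1, z.2), x, hm, hx⟩
      ⟨w, x, hw, hx⟩ := by
    by_cases h : z.2 = w.2
    · simp only [h]; rfl
    · exact SimpleGraph.Adj.reachable (gridGraph_adj_of_abs_sub_le_one_right w.1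
        (abs_sub_le_one_of_abs_sub_mul_lt hz.2 hw.2) h)
  exact horizontal.trans vertical

lemma preconnected_induce_gridTrace (hε : 0 < ε) (hK : IsPreconnected K) :
    (gridGraph.induce (gridTrace ε K)).Preconnected := by
  let P (x y : EuclideanSpace ℝ (Fin 2)) : Prop :=
    ∀ (hx : x ∈ K) (hy : y ∈ K) z w (hz : x ∈ square ε z) (hw : y ∈ square ε w),
      (gridGraph.induce (gridTrace ε K)).Reachable ⟨z, x, hz, hx⟩ ⟨w, y, hw, hy⟩
  rintro ⟨z, x, hz, hx⟩ ⟨w, y, hw, hy⟩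
  refine hK.induction₂' P (fun x _ => ?_) (fun x y t _ hy _ hxy hyt hx ht z w hz hw => ?_) hx hy
    hx hy z w hz hw
  · obtain ⟨c, hc⟩ := exists_mem_square hε x
    have P_of_mem : ∀ y ∈ square ε c, P x y := fun y hyc hx hy z w hz hw =>
      (reachable_gridTrace_of_mem hx hz hc).trans (reachable_gridTrace_of_mem hy hyc hw)
    filter_upwards [mem_nhdsWithin_of_mem_nhds ((isOpen_square ε c).mem_nhds hc)] with y hyc
    exact ⟨P_of_mem y hyc, fun hy hx w z hw hz => (P_of_mem y hyc hx hy z w hz hw).symm⟩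
  · obtain ⟨c, hc⟩ := exists_mem_square hε y
    exact (hxy hx hy z c hz hc).trans (hyt hy ht c w hc hw)

lemma eventually_gridTrace_inter_subset (hK : IsCompact K) (hL : IsCompact L)
    (h : K ∩ L ⊆ interior M) :
    ∀ᶠ ε in 𝓝 (0 : ℝ), gridTrace ε K ∩ gridTrace ε L ⊆ gridTrace ε M := by
  have disjoint : Disjoint (K \ interior M) L :=
    disjoint_left.2 fun x hx hxL => hx.2 (h ⟨hx.1, hxL⟩)
  obtain ⟨δ, hδ, hdisj⟩ :=
    disjoint.exists_thickenings (hK.diff isOpen_interior) hL.isClosed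
  filter_upwards [gt_mem_nhds (by positivity : 0 < δ / 4)] with ε hε
  rintro z ⟨⟨x, hxz, hxK⟩, y, hyz, hyL⟩
  by_cases hxM : x ∈ M
  · exact ⟨x, hxz, hxM⟩
  · have hx := Metric.self_subset_thickening hδ _ (show x ∈ K \ interior M from
      ⟨hxK, fun hx => hxM (interior_subset hx)⟩)
    have hxL : x ∈ Metric.thickening δ L :=
      Metric.mem_thickening_iff.2 ⟨y, hyL, by linarith [dist_lt_of_mem_square hxz hyz]⟩
    exact absurd hxL (hdisj.notMem_of_mem_left hx)

lemma eventually_disjoint_gridTrace (hK : IsCompact K) (hL : IsCompact L) (h : Disjoint K L) :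
    ∀ᶠ ε in 𝓝 (0 : ℝ), Disjoint (gridTrace ε K) (gridTrace ε L) := by
  filter_upwards [eventually_gridTrace_inter_subset (M := ∅) hK hL (by simp [h.inter_eq])] with ε hε
  rw [disjoint_iff_inter_eq_empty, ← subset_empty_iff]
  simpa [gridTrace] using hε

variable {V N : Type*} {inc : N → V → Prop} {patch patchCore : V → Set (EuclideanSpace ℝ (Fin 2))}
  {block blockCore : N → Set (EuclideanSpace ℝ (Fin 2))}

lemma gridTrace_filledCore_inter_subset {C C' : N}
    (h : gridTrace ε (blockCore C) ∩ gridTrace ε (blockCore C') ⊆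
      gridTrace ε (⋃ D, patchCore D)) :
    gridTrace ε (filledCore inc patchCore blockCore C) ∩
      gridTrace ε (filledCore inc patchCore blockCore C') ⊆ ⋃ D, gridTrace ε (patchCore D) := by
  have trace_iUnion : gridTrace ε (⋃ D, patchCore D) ⊆ ⋃ D, gridTrace ε (patchCore D) := by
    rintro z ⟨x, hz, hx⟩
    obtain ⟨D, hD⟩ := mem_iUnion.1 hx
    exact mem_iUnion.2 ⟨D, x, hz, hD⟩
  have patches_subset (C : N) : ⋃ D : {D | inc C D}, patchCore D ⊆ ⋃ D, patchCore D :=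
    iUnion_subset fun D => subset_iUnion patchCore D
  simp only [filledCore, gridTrace_union]
  rintro z ⟨hz | hz, hz' | hz'⟩
  · exact trace_iUnion (h ⟨hz, hz'⟩)
  · exact trace_iUnion (gridTrace_mono (patches_subset C') hz')
  all_goals exact trace_iUnion (gridTrace_mono (patches_subset C) hz)

lemma IsRealization.eventually_isRealization_gridTrace [Finite V] [Finite N]
    (h : IsRealization inc patch block)
    (core : IsCompactCore inc patch block patchCore blockCore) :
    ∀ᶠ ε in 𝓝 (0 : ℝ), IsRealization inc (fun D => gridTrace ε (patchCore D))
      fun C => gridTrace ε (filledCore inc patchCore blockCore C) := by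
  have disjoint_patches : ∀ᶠ ε in 𝓝 (0 : ℝ), ∀ D D', D ≠ D' →
      Disjoint (gridTrace ε (patchCore D)) (gridTrace ε (patchCore D')) := by
    simp only [Filter.eventually_all]
    exact fun D D' hne => eventually_disjoint_gridTrace (core.isCompact_patchCore D)
      (core.isCompact_patchCore D')
      ((h.pairwise_disjoint hne).mono (core.patchCore_subset D) (core.patchCore_subset D'))
  have disjoint_block_patch : ∀ᶠ ε in 𝓝 (0 : ℝ), ∀ C D, ¬inc C D →
      Disjoint (gridTrace ε (filledCore inc patchCore blockCore C))
        (gridTrace ε (patchCore D)) := by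
    simp only [Filter.eventually_all]
    exact fun C D hinc => eventually_disjoint_gridTrace (core.isCompact_filledCore C)
      (core.isCompact_patchCore D)
      ((h.disjoint_of_not_inc C D hinc).mono (core.filledCore_subset C h) (core.patchCore_subset D))
  have blocks_inter : ∀ᶠ ε in 𝓝 (0 : ℝ), ∀ C C', C ≠ C' →
      gridTrace ε (blockCore C) ∩ gridTrace ε (blockCore C') ⊆
        gridTrace ε (⋃ D, patchCore D) := by
    simp only [Filter.eventually_all]
    exact fun C C' hne => eventually_gridTrace_inter_subset (core.isCompact_blockCore C)
      (core.isCompact_blockCore C')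
      ((core.inter_subset C C' hne).trans (iUnion_subset fun D =>
        interior_mono (subset_iUnion patchCore D)))
  filter_upwards [disjoint_patches, disjoint_block_patch, blocks_inter] with ε h₁ h₂ h₃
  exact ⟨fun D D' hne => h₁ D D' hne,
    fun C D hD => gridTrace_mono
      ((subset_iUnion (fun D : {D | inc C D} => patchCore D) ⟨D, hD⟩).trans subset_union_right),
    h₂, fun C C' hne => gridTrace_filledCore_inter_subset (h₃ C C' hne), h.exists_inc⟩

theorem IsRealization.exists_planar_graph [Fintype V] [Finite N]
    (h : IsRealization inc patch block)
    (patch_open : ∀ D, IsOpen (patch D)) (patch_connected : ∀ D, IsPathConnected (patch D))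
    (block_open : ∀ C, IsOpen (block C)) (block_connected : ∀ C, IsPathConnected (block C)) :
    ∃ (G : SimpleGraph V) (_ : Fintype G.edgeSet), Fintype.card G.edgeSet ≤ 3 * Fintype.card V ∧
      ∀ C, (G.induce {D | inc C D}).Preconnected := by
  classical
  obtain ⟨patchCore, blockCore, core⟩ :=
    h.exists_isCompactCore patch_open patch_connected block_open block_connected
  obtain ⟨ε, hgrid, hε : 0 < ε⟩ := (((h.eventually_isRealization_gridTrace core).filter_mono
    nhdsWithin_le_nhds).and (self_mem_nhdsWithin (s := Ioi 0))).exists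
  have patch_nonempty D := nonempty_gridTrace hε (core.isConnected_patchCore D).nonempty
  obtain ⟨β, hβ, total⟩ := hgrid.exists_isCompatibleLabelling_total
    (fun D => finite_gridTrace hε (core.isCompact_patchCore D))
    (fun D => (SimpleGraph.connected_iff _).2
      ⟨preconnected_induce_gridTrace hε (core.isConnected_patchCore D).isPreconnected,
        (patch_nonempty D).to_subtype⟩)
    (fun C => finite_gridTrace hε (core.isCompact_filledCore C))
    (fun C => preconnected_induce_gridTrace hε (core.isPreconnected_filledCore C))
  refine ⟨contractionGraph gridGraph β, inferInstance,
    card_edgeSet_contractionGraph_le hβ.toIsConnectedLabelling, fun C => ?_⟩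
  refine preconnected_induce_contractionGraph
    (preconnected_induce_gridTrace hε (core.isPreconnected_filledCore C)) (fun a ha => ?_)
    (fun D hD => ?_)
  · obtain ⟨D, hD⟩ := Option.ne_none_iff_exists'.1 (total C a ha)
    exact ⟨D, hβ.inc_of_label C D a ha hD, hD⟩
  · obtain ⟨a, ha⟩ := patch_nonempty D
    exact ⟨a, hgrid.patch_subset C D hD ha, hβ.label_patch D a ha⟩

end Discretization

section Count

variable {K V N : Type*}

/-- A rooted spanning tree, given by parent pointers that decrease a rank, of each of the vertex
sets `{D | inc C D}` in `G`. -/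
structure SpanningTrees (G : SimpleGraph V) (inc : K → V → Prop) where
  /-- The root of the tree of `C`. -/
  root : K → V
  /-- The parent of a vertex in the tree of `C`, with an arbitrary value at the root. -/
  parent : K → V → V
  /-- The depth of a vertex in the tree of `C`. -/
  rank : K → V → ℕ
  inc_root : ∀ C, inc C (root C)
  inc_parent : ∀ {C D}, inc C D → D ≠ root C → inc C (parent C D)
  adj_parent : ∀ {C D}, inc C D → D ≠ root C → G.Adj (parent C D) D
  rank_parent_lt : ∀ {C D}, inc C D → D ≠ root C → rank C (parent C D) < rank C D

lemma exists_adj_dist_lt_of_preconnected {G : SimpleGraph V} (hG : G.Preconnected) {r v : V}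
    (hv : v ≠ r) : ∃ w, G.Adj w v ∧ G.dist w r < G.dist v r := by
  obtain ⟨walk, hwalk⟩ := (hG v r).exists_walk_length_eq_dist
  cases walk with
  | nil => exact absurd rfl hv
  | cons hadj tail =>
    refine ⟨_, hadj.symm, ?_⟩
    rw [← hwalk, SimpleGraph.Walk.length_cons]
    exact Nat.lt_succ_of_le (SimpleGraph.dist_le tail)

lemma nonempty_spanningTrees {G : SimpleGraph V} {inc : K → V → Prop}
    (hG : ∀ C, (G.induce {D | inc C D}).Preconnected) (hinc : ∀ C, ∃ D, inc C D) :
    Nonempty (SpanningTrees G inc) := by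
  classical
  choose root inc_root using hinc
  let dist (C : K) (D : {D | inc C D}) := (G.induce {D | inc C D}).dist D ⟨root C, inc_root C⟩
  have closer : ∀ C D, ∃ P, ∀ (h : inc C D), D ≠ root C →
      ∃ hP : inc C P, G.Adj P D ∧ dist C ⟨P, hP⟩ < dist C ⟨D, h⟩ := by
    intro C D
    by_cases h : inc C D ∧ D ≠ root C
    · obtain ⟨P, hadj, hlt⟩ := exists_adj_dist_lt_of_preconnected (hG C)
        (v := ⟨D, h.1⟩) (r := ⟨root C, inc_root C⟩) (by simpa using h.2)
      exact ⟨P, fun _ _ => ⟨P.2, hadj, hlt⟩⟩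
    · exact ⟨D, fun h₁ h₂ => absurd ⟨h₁, h₂⟩ h⟩
  choose parent hparent using closer
  refine ⟨⟨root, parent, fun C D => if h : inc C D then dist C ⟨D, h⟩ else 0, inc_root,
    fun h hne => (hparent _ _ h hne).1, fun h hne => (hparent _ _ h hne).2.1, fun h hne => ?_⟩⟩
  obtain ⟨hP, -, hlt⟩ := hparent _ _ h hne
  simpa only [dif_pos h, dif_pos hP] using hlt

/-- Labels of `V` by sets of size `k + 1` and of `K` by sets of size `k`, such that every facet of
the label of `D` is the label of exactly one `C` incident to `D`. -/
structure IsFacetLabelling (k : ℕ) (inc : K → V → Prop) (s : V → Finset N) (t : K → Finset N) :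
    Prop where
  card_vertex : ∀ D, #(s D) = k + 1
  card_block : ∀ C, #(t C) = k
  subset_of_inc : ∀ {C D}, inc C D → t C ⊆ s D
  exists_inc : ∀ D, ∀ τ ⊆ s D, #τ = k → ∃ C, inc C D ∧ t C = τ
  eq_of_inc : ∀ {C C' D}, inc C D → inc C' D → t C = t C' → C = C'

variable {k : ℕ} {inc : K → V → Prop} {s : V → Finset N} {t : K → Finset N} {G : SimpleGraph V}
  (T : SpanningTrees G inc) (facet : Finset N → Finset N)

/-- The incidences at which the tree of `C` is at its root, or `C` is the distinguished facet
`facet (s D)`, or the label changes from the parent to `D`. -/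
def IsEssential (s : V → Finset N) (t : K → Finset N) (q : K × V) : Prop :=
  inc q.1 q.2 ∧ (q.2 = T.root q.1 ∨ t q.1 = facet (s q.2) ∨ s q.2 ≠ s (T.parent q.1 q.2))

variable {T facet}

lemma IsFacetLabelling.exists_isEssential_of_facet (h : IsFacetLabelling k inc s t)
    (D : V) {τ : Finset N} (hτ : τ ⊆ s D) (hcard : #τ = k) :
    ∃ q : K × V, IsEssential T facet s t q ∧ s q.2 = s D ∧ t q.1 = τ := by
  obtain ⟨C₀, hC₀⟩ := h.exists_inc D τ hτ hcard
  obtain ⟨⟨C, D'⟩, ⟨hinc, hs, ht⟩, minimal⟩ := exists_minimalFor_of_wellFoundedLT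
    (fun q : K × V => inc q.1 q.2 ∧ s q.2 = s D ∧ t q.1 = τ) (fun q => T.rank q.1 q.2)
    ⟨(C₀, D), hC₀.1, rfl, hC₀.2⟩
  refine ⟨(C, D'), ⟨hinc, ?_⟩, hs, ht⟩
  by_contra! hnot
  have lt := T.rank_parent_lt hinc hnot.1
  exact lt.not_ge
    (minimal (j := (C, T.parent C D')) ⟨T.inc_parent hinc hnot.1, hnot.2.2 ▸ hs, ht⟩ lt.le)

open Classical in
lemma IsFacetLabelling.card_le_card_isEssential_facet [Fintype K] [Fintype V]
    (h : IsFacetLabelling k inc s t)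
    (hfacet : ∀ D, facet (s D) ⊆ s D ∧ #(facet (s D)) = k) :
    Fintype.card V ≤ #{q | IsEssential T facet s t q ∧ t q.1 = facet (s q.2)} := by
  refine Finset.card_le_card_of_surjOn Prod.snd fun D _ => ?_
  obtain ⟨C, hC, ht⟩ := h.exists_inc D _ (hfacet D).1 (hfacet D).2
  exact ⟨(C, D), by simpa using ⟨⟨hC, Or.inr (Or.inl ht)⟩, ht⟩, rfl⟩

open Classical in
lemma IsFacetLabelling.mul_card_image_le_card_isEssential_not_facet [DecidableEq N] [Fintype K]
    [Fintype V] (h : IsFacetLabelling k inc s t)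
    (hfacet : ∀ D, facet (s D) ⊆ s D ∧ #(facet (s D)) = k) :
    k * #(Finset.univ.image s) ≤
      #{q | IsEssential T facet s t q ∧ t q.1 ≠ facet (s q.2)} := by
  refine Finset.mul_card_image_le_card_of_maps_to (f := fun q => s q.2) (by simp) k fun σ hσ => ?_
  obtain ⟨D, -, rfl⟩ := Finset.mem_image.1 hσ
  have card_other_facets : #(((s D).powersetCard k).erase (facet (s D))) = k := by
    rw [Finset.card_erase_of_mem (Finset.mem_powersetCard.2 (hfacet D)), Finset.card_powersetCard,
      h.card_vertex, Nat.choose_succ_self_right, Nat.add_sub_cancel]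
  refine card_other_facets.ge.trans (Finset.card_le_card_of_surjOn (fun q => t q.1) fun τ hτ => ?_)
  obtain ⟨hne, hτ⟩ := Finset.mem_erase.1 (Finset.mem_coe.1 hτ)
  obtain ⟨hsub, hcard⟩ := Finset.mem_powersetCard.1 hτ
  obtain ⟨q, hq, hs, rfl⟩ := h.exists_isEssential_of_facet (T := T) (facet := facet) D hsub hcard
  exact ⟨q, by simp [hq, hs, hne], rfl⟩

lemma IsFacetLabelling.label_eq_of_isEssential [DecidableEq N] (h : IsFacetLabelling k inc s t)
    {C : K} {D : V} (hD : IsEssential T facet s t (C, D)) (hroot : D ≠ T.root C) :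
    t C = if s D = s (T.parent C D) then facet (s D) else s D ∩ s (T.parent C D) := by
  split_ifs with heq
  · exact (hD.2.resolve_left hroot).resolve_right (not_not.2 heq)
  · refine Finset.eq_of_subset_of_card_le (Finset.subset_inter (h.subset_of_inc hD.1)
      (h.subset_of_inc (T.inc_parent hD.1 hroot))) ?_
    have inter_ssubset : s D ∩ s (T.parent C D) ⊂ s D :=
      Finset.inter_subset_left.ssubset_of_ne fun hinter =>
        heq (Finset.eq_of_subset_of_card_le (Finset.inter_eq_left.1 hinter)
          (by rw [h.card_vertex, h.card_vertex]))
    have lt := Finset.card_lt_card inter_ssubset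
    rw [h.card_vertex] at lt
    rw [h.card_block]
    exact Nat.lt_succ_iff.1 lt

open Classical in
/-- The label of `C` can be read off from the tree edge, and determines `C` as each end of the
edge is incident to only one such block. -/
lemma IsFacetLabelling.card_isEssential_ne_root_le [Fintype K] [Fintype V] [Fintype G.edgeSet]
    (h : IsFacetLabelling k inc s t) :
    #{q | IsEssential T facet s t q ∧ q.2 ≠ T.root q.1} ≤ Fintype.card G.edgeSet := by
  rw [← SimpleGraph.edgeFinset_card]
  refine Finset.card_le_card_of_injOn (fun q => s(T.parent q.1 q.2, q.2)) ?_ ?_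
  · rintro ⟨C, D⟩ hq
    obtain ⟨hD, hroot⟩ := (Finset.mem_filter.1 hq).2
    simpa using T.adj_parent hD.1 hroot
  · rintro ⟨C, D⟩ hq ⟨C', D'⟩ hq' heq
    obtain ⟨hD, hroot⟩ := (Finset.mem_filter.1 hq).2
    obtain ⟨hD', hroot'⟩ := (Finset.mem_filter.1 hq').2
    have label := h.label_eq_of_isEssential hD hroot
    have label' := h.label_eq_of_isEssential hD' hroot'
    dsimp only at hroot hroot' heq
    rcases Sym2.eq_iff.1 heq with ⟨hP, rfl⟩ | ⟨hP, hP'⟩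
    · exact congrArg (·, D) (h.eq_of_inc hD.1 hD'.1 (by rw [label, label', hP]))
    · have inc_parent' := T.inc_parent hD'.1 hroot'
      rw [← hP'] at inc_parent'
      obtain rfl := h.eq_of_inc hD.1 inc_parent' (by
        rw [label, label', hP, ← hP', Finset.inter_comm]
        grind)
      have lt := T.rank_parent_lt hD.1 hroot
      have lt' := T.rank_parent_lt hD'.1 hroot'
      rw [hP] at lt
      rw [← hP'] at lt'
      exact absurd lt lt'.asymm

open Classical in
lemma IsFacetLabelling.card_isEssential_le [Fintype K] [Fintype V] [Fintype G.edgeSet]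
    (h : IsFacetLabelling k inc s t) :
    #{q | IsEssential T facet s t q} ≤ Fintype.card K + Fintype.card G.edgeSet := by
  rw [← Finset.card_filter_add_card_filter_not fun q : K × V => q.2 = T.root q.1,
    Finset.filter_filter, Finset.filter_filter]
  refine add_le_add ?_ h.card_isEssential_ne_root_le
  refine Finset.card_le_card_of_injOn Prod.fst (fun _ _ => Finset.mem_univ _) ?_
  rintro ⟨C, D⟩ hD ⟨C', D'⟩ hD' (rfl : C = C')
  exact Prod.ext rfl ((Finset.mem_filter.1 hD).2.2.trans (Finset.mem_filter.1 hD').2.2.symm)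

theorem IsFacetLabelling.mul_card_image_add_card_le [DecidableEq N] [Fintype K] [Fintype V]
    [Fintype G.edgeSet] (h : IsFacetLabelling k inc s t) (hinc : ∀ C, ∃ D, inc C D)
    (hG : ∀ C, (G.induce {D | inc C D}).Preconnected) :
    k * #(Finset.univ.image s) + Fintype.card V ≤ Fintype.card K + Fintype.card G.edgeSet := by
  classical
  obtain ⟨T⟩ := nonempty_spanningTrees hG hinc
  have exists_facet : ∀ σ : Finset N, ∃ τ ⊆ σ, #τ = #σ - 1 := fun σ =>
    Finset.exists_subset_card_eq (Nat.sub_le _ _)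
  choose facet facet_subset card_facet using exists_facet
  have hfacet : ∀ D, facet (s D) ⊆ s D ∧ #(facet (s D)) = k := fun D =>
    ⟨facet_subset _, by rw [card_facet, h.card_vertex, Nat.add_sub_cancel]⟩
  have lower := add_le_add (h.card_le_card_isEssential_facet (T := T) hfacet)
    (h.mul_card_image_le_card_isEssential_not_facet (T := T) hfacet)
  rw [← Finset.filter_filter, ← Finset.filter_filter, Finset.card_filter_add_card_filter_not]
    at lower
  have upper := h.card_isEssential_le (T := T) (facet := facet)
  rw [add_comm]
  exact lower.trans upper

end Count

section Cells

variable {N X : Type*} {A : N → Set X} {m : ℕ}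

lemma biInter_eq_empty_of_fNum_eq_zero {n : ℕ} {A : Fin n → Set X} (h : fNum A m = 0)
    {σ : Finset (Fin n)} (hσ : #σ = m + 1) : ⋂ i ∈ σ, A i = ∅ := by
  rw [fNum, Finite.card_eq_zero_iff] at h
  exact Set.not_nonempty_iff_eq_empty.1 fun hne => h.false ⟨σ, hσ, hne⟩

lemma subset_of_mem_biInter (hA : ∀ σ : Finset N, #σ = m + 1 → ⋂ i ∈ σ, A i = ∅) {σ τ : Finset N}
    (hσ : #σ = m) {x : X} (hxσ : x ∈ ⋂ i ∈ σ, A i) (hxτ : x ∈ ⋂ i ∈ τ, A i) : τ ⊆ σ := by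
  classical
  intro i hi
  by_contra hiσ
  have hx : x ∈ ⋂ j ∈ insert i σ, A j := by
    rw [Finset.set_biInter_insert]
    exact ⟨Set.mem_iInter₂.1 hxτ i hi, hxσ⟩
  rw [hA _ (by rw [Finset.card_insert_of_notMem hiσ, hσ])] at hx
  exact hx

variable [TopologicalSpace X]

/-- A path component of an intersection of `m` members of the family `A`, remembering these
members. -/
structure Cell (A : N → Set X) (m : ℕ) where
  /-- The members that are intersected. -/
  index : Finset N
  card_index : #index = m
  /-- The path component. -/
  carrier : Set X
  exists_carrier_eq : ∃ x ∈ ⋂ i ∈ index, A i, carrier = pathComponentIn (⋂ i ∈ index, A i) x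

namespace Cell

lemma carrier_eq_of_mem (C : Cell A m) {x : X} (hx : x ∈ C.carrier) :
    C.carrier = pathComponentIn (⋂ i ∈ C.index, A i) x := by
  obtain ⟨y, -, hy⟩ := C.exists_carrier_eq
  rw [hy] at hx ⊢
  exact (pathComponentIn_congr hx).symm

lemma carrier_subset (C : Cell A m) : C.carrier ⊆ ⋂ i ∈ C.index, A i := by
  obtain ⟨y, -, hy⟩ := C.exists_carrier_eq
  exact hy ▸ pathComponentIn_subset

lemma isPathConnected_carrier (C : Cell A m) : IsPathConnected C.carrier := by
  obtain ⟨y, hmem, hy⟩ := C.exists_carrier_eq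
  exact hy ▸ isPathConnected_pathComponentIn hmem

lemma isOpen_carrier [LocallyPathConnectedSpace X] (C : Cell A m)
    (h : IsOpen (⋂ i ∈ C.index, A i)) : IsOpen C.carrier := by
  obtain ⟨y, -, hy⟩ := C.exists_carrier_eq
  exact hy ▸ h.pathComponentIn y

lemma eq_of_index_eq {C C' : Cell A m} (h : C.index = C'.index) {x : X} (hx : x ∈ C.carrier)
    (hx' : x ∈ C'.carrier) : C = C' := by
  have carrier_eq : C.carrier = C'.carrier := by
    rw [C.carrier_eq_of_mem hx, C'.carrier_eq_of_mem hx', h]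
  cases C; cases C'; cases h; cases carrier_eq; rfl

lemma exists_index_eq {σ : Finset N} (hσ : #σ = m) {x : X} (hx : x ∈ ⋂ i ∈ σ, A i) :
    ∃ C : Cell A m, C.index = σ ∧ x ∈ C.carrier :=
  ⟨⟨σ, hσ, pathComponentIn _ x, x, hx, rfl⟩, rfl, mem_pathComponentIn_self hx⟩

lemma exists_injective_prod_fin {ι : Type*} {f : ι → Cell A m} (hf : f.Injective) {b : ℕ}
    {P : Finset N → Prop} (hP : ∀ c, P (f c).index)
    (hb : ∀ σ, P σ → AtMostComponents b (⋂ i ∈ σ, A i)) :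
    ∃ e : ι → {σ // P σ} × Fin b, e.Injective := by
  choose g hg using hb
  have exists_joined (c : ι) : ∃ j, g _ (hP c) j ∈ (f c).carrier := by
    obtain ⟨x, hx, hcarrier⟩ := (f c).exists_carrier_eq
    obtain ⟨j, hj⟩ := hg _ (hP c) x hx
    exact ⟨j, hcarrier ▸ hj⟩
  choose j hj using exists_joined
  refine ⟨fun c => (⟨(f c).index, hP c⟩, j c), fun c c' h => ?_⟩
  obtain ⟨hindex, hnumber⟩ := Prod.mk.inj h
  have point_eq : g _ (hP c) (j c) = g _ (hP c') (j c') := by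
    rw [hnumber]
    congr 1
    simpa using hindex
  exact hf (eq_of_index_eq (Subtype.mk.inj hindex) (hj c) (point_eq ▸ hj c'))

end Cell

/-- The cells of `m`-fold intersections that contain a cell of an `(m + 1)`-fold intersection. -/
abbrev HostCell (A : N → Set X) (m : ℕ) : Type _ :=
  {C : Cell A m // ∃ D : Cell A (m + 1), D.carrier ⊆ C.carrier}

/-- The incidence relation between host cells and the cells they contain. -/
def HostCell.Contains (C : HostCell A m) (D : Cell A (m + 1)) : Prop :=
  D.carrier ⊆ C.1.carrier

lemma HostCell.index_subset (hA : ∀ σ : Finset N, #σ = m + 2 → ⋂ i ∈ σ, A i = ∅)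
    {C : HostCell A m} {D : Cell A (m + 1)} {x : X} (hC : x ∈ C.1.carrier) (hD : x ∈ D.carrier) :
    C.1.index ⊆ D.index :=
  subset_of_mem_biInter hA D.card_index (D.carrier_subset hD) (C.1.carrier_subset hC)

lemma HostCell.contains_of_mem (hA : ∀ σ : Finset N, #σ = m + 2 → ⋂ i ∈ σ, A i = ∅)
    {C : HostCell A m} {D : Cell A (m + 1)} {x : X} (hC : x ∈ C.1.carrier) (hD : x ∈ D.carrier) :
    C.Contains D := by
  rw [HostCell.Contains, C.1.carrier_eq_of_mem hC, D.carrier_eq_of_mem hD]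
  exact pathComponentIn_mono (Set.biInter_subset_biInter_left (HostCell.index_subset hA hC hD))

lemma HostCell.exists_mem_of_ne {C C' : HostCell A m} (hne : C ≠ C') {x : X} (hC : x ∈ C.1.carrier)
    (hC' : x ∈ C'.1.carrier) : ∃ D : Cell A (m + 1), x ∈ D.carrier := by
  classical
  have index_ne : C.1.index ≠ C'.1.index := fun h =>
    hne (Subtype.ext (Cell.eq_of_index_eq h hC hC'))
  obtain ⟨i, hi', hi⟩ : ∃ i ∈ C'.1.index, i ∉ C.1.index := by
    by_contra! hsub
    exact index_ne (Finset.eq_of_subset_of_card_le hsub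
      (by rw [C.1.card_index, C'.1.card_index])).symm
  have hx : x ∈ ⋂ j ∈ insert i C.1.index, A j := by
    rw [Finset.set_biInter_insert]
    exact ⟨Set.mem_iInter₂.1 (C'.1.carrier_subset hC') i hi', C.1.carrier_subset hC⟩
  obtain ⟨D, -, hD⟩ := Cell.exists_index_eq
    (by rw [Finset.card_insert_of_notMem hi, C.1.card_index]) hx
  exact ⟨D, hD⟩

lemma isRealization_carrier (hA : ∀ σ : Finset N, #σ = m + 2 → ⋂ i ∈ σ, A i = ∅) :
    IsRealization HostCell.Contains (fun D : Cell A (m + 1) => D.carrier)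
      (fun C : HostCell A m => C.1.carrier) where
  pairwise_disjoint D D' hne := Set.disjoint_left.2 fun x hD hD' => by
    have subset {D D' : Cell A (m + 1)} (hD : x ∈ D.carrier) (hD' : x ∈ D'.carrier) :=
      subset_of_mem_biInter hA D.card_index (D.carrier_subset hD) (D'.carrier_subset hD')
    exact hne (Cell.eq_of_index_eq ((subset hD' hD).antisymm (subset hD hD')) hD hD')
  patch_subset _ _ h := h
  disjoint_of_not_inc _ _ h := Set.disjoint_left.2 fun _ hC hD =>
    h (HostCell.contains_of_mem hA hC hD)
  inter_subset _ _ hne _ hx := Set.mem_iUnion.2 (HostCell.exists_mem_of_ne hne hx.1 hx.2)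
  exists_inc C := C.2

lemma isFacetLabelling_index (hA : ∀ σ : Finset N, #σ = m + 2 → ⋂ i ∈ σ, A i = ∅) :
    IsFacetLabelling m HostCell.Contains (fun D : Cell A (m + 1) => D.index)
      (fun C : HostCell A m => C.1.index) where
  card_vertex D := D.card_index
  card_block C := C.1.card_index
  subset_of_inc {C D} h := by
    obtain ⟨x, hx⟩ := D.isPathConnected_carrier.nonempty
    exact HostCell.index_subset hA (h hx) hx
  exists_inc D τ hτ hcard := by
    obtain ⟨x, hx⟩ := D.isPathConnected_carrier.nonempty
    obtain ⟨C, rfl, hC⟩ := Cell.exists_index_eq hcard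
      (Set.biInter_subset_biInter_left hτ (D.carrier_subset hx))
    have subset : D.carrier ⊆ C.carrier := by
      rw [C.carrier_eq_of_mem hC, D.carrier_eq_of_mem hx]
      exact pathComponentIn_mono (Set.biInter_subset_biInter_left hτ)
    exact ⟨⟨C, D, subset⟩, subset, rfl⟩
  eq_of_inc {C C' D} h h' heq := by
    obtain ⟨x, hx⟩ := D.isPathConnected_carrier.nonempty
    exact Subtype.ext (Cell.eq_of_index_eq heq (h hx) (h' hx))

end Cells

section CardCells

variable {X : Type*} [TopologicalSpace X] {n b m : ℕ} {A : Fin n → Set X}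

lemma Cell.biInter_nonempty (C : Cell A m) : (⋂ i ∈ C.index, A i).Nonempty :=
  C.isPathConnected_carrier.nonempty.mono C.carrier_subset

lemma card_image_index_eq_fNum [Fintype (Cell A (m + 1))] :
    #(Finset.univ.image fun D : Cell A (m + 1) => D.index) = fNum A m := by
  rw [fNum, ← Nat.card_eq_finsetCard]
  refine Nat.card_congr (Equiv.subtypeEquivRight fun σ => ?_)
  simp only [Finset.mem_image, Finset.mem_univ, true_and]
  constructor
  · rintro ⟨D, rfl⟩
    exact ⟨D.card_index, D.biInter_nonempty⟩
  · rintro ⟨hσ, x, hx⟩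
    obtain ⟨D, hD, -⟩ := Cell.exists_index_eq hσ hx
    exact ⟨D, hD⟩

lemma exists_injective_cell
    (hb : ∀ σ : Finset (Fin n), #σ = m + 1 → AtMostComponents b (⋂ i ∈ σ, A i)) :
    ∃ e : Cell A (m + 1) →
      {σ : Finset (Fin n) // #σ = m + 1 ∧ (⋂ i ∈ σ, A i).Nonempty} × Fin b, e.Injective :=
  Cell.exists_injective_prod_fin Function.injective_id
    (fun D => ⟨D.card_index, D.biInter_nonempty⟩) fun σ hσ => hb σ hσ.1

lemma HostCell.index_ssubset (hA : ∀ σ : Finset (Fin n), #σ = m + 2 → ⋂ i ∈ σ, A i = ∅)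
    {C : HostCell A m} {D : Cell A (m + 1)} (h : C.Contains D) : C.1.index ⊂ D.index := by
  refine ((isFacetLabelling_index hA).subset_of_inc h).ssubset_of_ne fun heq => ?_
  have card_eq := congrArg Finset.card heq
  rw [C.1.card_index, D.card_index] at card_eq
  omega

lemma exists_injective_hostCell (hA : ∀ σ : Finset (Fin n), #σ = m + 3 → ⋂ i ∈ σ, A i = ∅)
    (hb : ∀ τ : Finset (Fin n), #τ = m + 1 → AtMostComponents b (⋂ i ∈ τ, A i)) :
    ∃ e : HostCell A (m + 1) → {τ : Finset (Fin n) // #τ = m + 1 ∧ (⋂ i ∈ τ, A i).Nonempty ∧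
      ∃ σ : Finset (Fin n), τ ⊂ σ ∧ #σ = m + 2 ∧ (⋂ i ∈ σ, A i).Nonempty} × Fin b,
      e.Injective := by
  refine Cell.exists_injective_prod_fin Subtype.val_injective (fun C => ?_) fun τ hτ => hb τ hτ.1
  obtain ⟨D, hD⟩ := C.2
  exact ⟨C.1.card_index, C.1.biInter_nonempty, D.index, HostCell.index_ssubset hA hD, D.card_index,
    D.biInter_nonempty⟩

end CardCells

section Bound

variable {N : Type*} {A : N → Set (EuclideanSpace ℝ (Fin 2))}

lemma mul_card_image_index_le {k : ℕ} [DecidableEq N] [Fintype (Cell A (k + 1))]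
    [Fintype (HostCell A k)]
    (hA : ∀ σ : Finset N, #σ = k + 2 → ⋂ i ∈ σ, A i = ∅)
    (isOpen : ∀ σ : Finset N, #σ = k ∨ #σ = k + 1 → IsOpen (⋂ i ∈ σ, A i)) :
    k * #(Finset.univ.image fun D : Cell A (k + 1) => D.index) ≤
      Fintype.card (HostCell A k) + 2 * Fintype.card (Cell A (k + 1)) := by
  obtain ⟨G, _, edges_le, connected⟩ := (isRealization_carrier hA).exists_planar_graph
    (fun D => D.isOpen_carrier (isOpen _ (.inr D.card_index)))
    (fun D => D.isPathConnected_carrier)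
    (fun C => C.1.isOpen_carrier (isOpen _ (.inl C.1.card_index)))
    (fun C => C.1.isPathConnected_carrier)
  have count := (isFacetLabelling_index hA).mul_card_image_add_card_le (fun C => C.2) connected
  omega

theorem mul_fNum_le {b n m : ℕ} {A : Fin n → Set (EuclideanSpace ℝ (Fin 2))}
    (hA : fNum A (m + 2) = 0)
    (h : ∀ σ : Finset (Fin n), #σ = m + 1 ∨ #σ = m + 2 →
      IsOpen (⋂ i ∈ σ, A i) ∧ AtMostComponents b (⋂ i ∈ σ, A i)) :
    (m + 1) * fNum A (m + 1) ≤ fInd A m * b + 2 * (fNum A (m + 1) * b) := by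
  have empty (σ : Finset (Fin n)) (hσ : #σ = m + 3) := biInter_eq_empty_of_fNum_eq_zero hA hσ
  obtain ⟨e, he⟩ := exists_injective_cell (A := A) fun σ hσ => (h σ (.inr hσ)).2
  obtain ⟨e', he'⟩ := exists_injective_hostCell empty fun τ hτ => (h τ (.inl hτ)).2
  have := Finite.of_injective e he
  have := Finite.of_injective e' he'
  have := Fintype.ofFinite (Cell A (m + 2))
  have := Fintype.ofFinite (HostCell A (m + 1))
  have card_cell : Fintype.card (Cell A (m + 2)) ≤ fNum A (m + 1) * b := by
    rw [← Nat.card_eq_fintype_card]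
    exact (Nat.card_le_card_of_injective e he).trans_eq (by rw [Nat.card_prod, Nat.card_fin]; rfl)
  have card_hostCell : Fintype.card (HostCell A (m + 1)) ≤ fInd A m * b := by
    rw [← Nat.card_eq_fintype_card]
    exact (Nat.card_le_card_of_injective e' he').trans_eq (by rw [Nat.card_prod, Nat.card_fin]; rfl)
  calc (m + 1) * fNum A (m + 1)
      = (m + 1) * #(Finset.univ.image fun D : Cell A (m + 2) => D.index) := by
        rw [card_image_index_eq_fNum]
    _ ≤ Fintype.card (HostCell A (m + 1)) + 2 * Fintype.card (Cell A (m + 2)) :=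
        mul_card_image_index_le empty fun σ hσ => (h σ hσ).1
    _ ≤ fInd A m * b + 2 * (fNum A (m + 1) * b) := by gcongr

end Bound

end PlanarNerve

open PlanarNerve in
theorem planar_upper_bound_b_components_general (b k n : ℕ) (hk : 2 * b < k)
    (A : Fin n → Set (EuclideanSpace ℝ (Fin 2)))
    (h1 : fNum A (k + 1) = 0)
    (h2 : ∀ σ : Finset (Fin n), σ.card = k ∨ σ.card = k + 1 →
      IsOpen (⋂ i ∈ σ, A i) ∧ AtMostComponents b (⋂ i ∈ σ, A i)) :
    (fNum A k : ℝ) ≤ ((b : ℝ) / ((k : ℝ) - 2 * b)) * fInd A (k - 1) := by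
  obtain ⟨m, rfl⟩ := Nat.exists_eq_add_one_of_ne_zero (Nat.ne_zero_of_lt hk)
  have count : ((m + 1 : ℕ) : ℝ) * fNum A (m + 1) ≤ fInd A m * b + 2 * (fNum A (m + 1) * b) := by
    exact_mod_cast mul_fNum_le h1 h2
  have pos : (0 : ℝ) < (m + 1 : ℕ) - 2 * b := sub_pos.2 (by exact_mod_cast hk)
  rw [div_mul_eq_mul_div, le_div_iff₀ pos, Nat.add_sub_cancel]
  linarith

/-- **Theorem (main, general b).** Let `b ≥ 2`, `k > 2b`, and let `𝒜 = {A_1, …, A_n}` be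
subsets of `ℝ²` such that (i) `f_{k+1}(𝒜) = 0` and (ii) each `k`-wise and `(k+1)`-wise
intersection is open (possibly empty) with at most `b` path-connected components. Then
`f_k(𝒜) ≤ (b/(k-2b)) · f_{k-1}^{ind}(𝒜)`. -/
theorem planar_upper_bound_b_components (b k n : ℕ) (hb : 2 ≤ b) (hk : 2 * b < k)
    (A : Fin n → Set (EuclideanSpace ℝ (Fin 2)))
    (h1 : fNum A (k + 1) = 0)
    (h2 : ∀ σ : Finset (Fin n), σ.card = k ∨ σ.card = k + 1 →
      IsOpen (⋂ i ∈ σ, A i) ∧ AtMostComponents b (⋂ i ∈ σ, A i)) :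
    (fNum A k : ℝ) ≤ ((b : ℝ) / ((k : ℝ) - 2 * b)) * fInd A (k - 1) :=
  planar_upper_bound_b_components_general b k n hk A h1 h2
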